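/- arXiv:math/0401091 — 2 statements merged into one kernel-verified Lean document; each statement's English description precedes it below -/
import Mathlib

section
/- Let (X, μ) and (Y, ν) be standard Borel spaces with σ-finite measures, K a countable index set, and let a_k : X → ℂ, b_k : Y → ℂ be bounded measurable functions with Σ_k (sup_x |a_k(x)|)² < ∞ and Σ_k (sup_y |b_k(y)|)² < ∞. Define Δ, Δ̃ : B(L²(X,μ), L²(Y,ν)) → B(L²(X,μ), L²(Y,ν)) by Δ(T) = Σ_{k∈K} M_{b_k} T M_{a_k} and Δ̃(T) = Σ_{k∈K} M_{conj(b_k)} T M_{conj(a_k)}, where M_f denotes multiplication by f and conj denotes complex conjugation. Assume there is a set D ⊆ ℓ²(K) of finite two-dimensional Hausdorff measure such that (a_k(x))_{k∈K} ∈ D for μ-almost every x. Then for every T ∈ B(L²(X,μ), L²(Y,ν)): Δ(T) is Hilbert–Schmidt if and only if Δ̃(T) is Hilbert–Schmidt, and in that case ‖Δ(T)‖₂ = ‖Δ̃(T)‖₂. (Extension of the Fuglede–Weiss theorem: ‖Σ_k B_k X A_k‖₂ = ‖Σ_k B_k* X A_k*‖₂ when the left coefficient family has essential dimension at most 2, with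 the convention that the Hilbert–Schmidt norm of a non-Hilbert–Schmidt operator is ∞.) -/
open MeasureTheory Filter ContinuousLinearMap
open scoped ENNReal NNReal

/-- The squared Hilbert–Schmidt norm of an operator, computed in the Hilbert basis `b`
(the value is independent of the choice of basis); it is `∞` precisely when the operator
is not Hilbert–Schmidt. -/
noncomputable def hsNormSq {E F : Type*} [NormedAddCommGroup E] [InnerProductSpace ℂ E]
    [NormedAddCommGroup F] [InnerProductSpace ℂ F] {ι : Type*} (b : HilbertBasis ι ℂ E)
    (T : E →L[ℂ] F) : ℝ≥0∞ :=
  ∑' i, (‖T (b i)‖₊ : ℝ≥0∞) ^ 2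

open scoped Topology

namespace FW

section HS

variable {H G : Type*} [NormedAddCommGroup H] [InnerProductSpace ℂ H]
  [NormedAddCommGroup G] [InnerProductSpace ℂ G] {ι : Type*}

lemma lp_enorm_sq {J : Type*} {F : Type*} [NormedAddCommGroup F]
    (u : lp (fun _ : J => F) 2) : ‖u‖ₑ ^ 2 = ∑' i, ‖u i‖ₑ ^ 2 := by
  have h := lp.hasSum_norm (p := 2) (by norm_num) u
  simp only [ENNReal.toReal_ofNat, Real.rpow_ofNat] at h
  have h2 := congrArg ENNReal.ofReal h.tsum_eq
  rw [ENNReal.ofReal_tsum_of_nonneg (fun i => by positivity) h.summable] at h2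
  simp only [ENNReal.ofReal_pow (norm_nonneg _), ofReal_norm] at h2
  rw [h2]

lemma hs_eq (bas : HilbertBasis ι ℂ H) (S : H →L[ℂ] G) (u : lp (fun _ : ι => G) 2)
    (h : ∀ i, u i = S (bas i)) : hsNormSq bas S = ‖u‖ₑ ^ 2 := by
  rw [lp_enorm_sq]
  simp only [h]
  rfl

lemma lp_mk {J : Type*} {F : Type*} [NormedAddCommGroup F] (f : J → F)
    (h : ∑' i, ‖f i‖ₑ ^ 2 ≠ ⊤) : ∃ u : lp (fun _ : J => F) 2, ∀ i, u i = f i := by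
  have hm : Memℓp f 2 := by
    apply memℓp_gen
    simp only [ENNReal.toReal_ofNat, Real.rpow_ofNat]
    have := ENNReal.summable_toReal h
    simpa using this
  exact ⟨⟨f, hm⟩, fun i => rfl⟩

lemma hs_rep (bas : HilbertBasis ι ℂ H) (S : H →L[ℂ] G) (h : hsNormSq bas S ≠ ⊤) :
    ∃ u : lp (fun _ : ι => G) 2, ∀ i, u i = S (bas i) :=
  lp_mk _ h

/-- the rank one operator `e ↦ ⟪x, e⟫ y` as an element of the Hilbert–Schmidt space -/
lemma rankOne_exists (bas : HilbertBasis ι ℂ H) (x : H) (y : G) :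
    ∃ u : lp (fun _ : ι => G) 2, ∀ i, u i = inner ℂ x (bas i) • y := by
  have hm : Memℓp (fun i => inner ℂ x (bas i) • y) 2 := by
    apply memℓp_gen
    simp only [ENNReal.toReal_ofNat, Real.rpow_ofNat]
    have h := (bas.summable_inner_mul_inner x x).norm.mul_right (‖y‖ ^ 2)
    refine h.congr fun i => ?_
    rw [norm_mul, norm_smul, norm_inner_symm (bas i) x]
    ring
  exact ⟨⟨_, hm⟩, fun i => rfl⟩

noncomputable def R1 (bas : HilbertBasis ι ℂ H) (x : H) (y : G) : lp (fun _ : ι => G) 2 :=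
  (rankOne_exists bas x y).choose

lemma R1_apply (bas : HilbertBasis ι ℂ H) (x : H) (y : G) (i : ι) :
    R1 bas x y i = inner ℂ x (bas i) • y := (rankOne_exists bas x y).choose_spec i

lemma R1_inner (bas : HilbertBasis ι ℂ H) (x x' : H) (y y' : G) :
    inner ℂ (R1 bas x y) (R1 bas x' y') = inner ℂ x' x * inner ℂ y y' := by
  refine (lp.hasSum_inner (𝕜 := ℂ) (R1 bas x y) (R1 bas x' y')).unique ?_
  have h := (bas.hasSum_inner_mul_inner x' x).mul_right (inner ℂ y y')
  refine h.congr_fun ?_ |> id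
  intro i
  simp only [R1_apply, inner_smul_left, inner_smul_right, inner_conj_symm]
  ring

lemma R1_norm (bas : HilbertBasis ι ℂ H) (x : H) (y : G) :
    ‖R1 bas x y‖ = ‖x‖ * ‖y‖ := by
  have h := R1_inner bas x x y y
  rw [inner_self_eq_norm_sq_to_K, inner_self_eq_norm_sq_to_K, inner_self_eq_norm_sq_to_K] at h
  have h2 : ‖R1 bas x y‖ ^ 2 = (‖x‖ * ‖y‖) ^ 2 := by
    rw [mul_pow]; exact_mod_cast h
  exact (pow_left_inj₀ (norm_nonneg _) (by positivity) two_ne_zero).1 h2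

/-- inner product with `S` -/
lemma R1_inner_rep (bas : HilbertBasis ι ℂ H) (x : H) (y : G) (S : H →L[ℂ] G)
    (u : lp (fun _ : ι => G) 2) (hu : ∀ i, u i = S (bas i)) :
    inner ℂ (R1 bas x y) u = inner ℂ y (S x) := by
  refine (lp.hasSum_inner (𝕜 := ℂ) (R1 bas x y) u).unique ?_
  have h := (bas.hasSum_repr x).mapL ((innerSL ℂ y) ∘L S)
  simp only [ContinuousLinearMap.comp_apply, map_smul, innerSL_apply_apply] at h
  convert h using 2 with i
  rw [R1_apply, hu, inner_smul_left, inner_conj_symm, bas.repr_apply_apply]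
  rfl

lemma weak_zero (u : ℕ → lp (fun _ : ι => G) 2) (M : ℝ) (hM : ∀ n, ‖u n‖ ≤ M)
    (h0 : ∀ i, Tendsto (fun n => u n i) atTop (𝓝 0)) (v : lp (fun _ : ι => G) 2) :
    Tendsto (fun n => inner ℂ v (u n)) atTop (𝓝 0) := by
  classical
  have hM0 : 0 ≤ M := (norm_nonneg _).trans (hM 0)
  rw [Metric.tendsto_atTop]
  intro ε hε
  have hs := lp.hasSum_single (E := fun _ : ι => G) (p := 2) (by norm_num) v
  have hs2 := (Metric.tendsto_atTop.1 hs) (ε / (2 * (M + 1))) (by positivity)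
  obtain ⟨s, hs⟩ := hs2
  have hs := hs s le_rfl
  have h1 : Tendsto (fun n => ∑ i ∈ s, inner ℂ (v i) (u n i)) atTop (𝓝 0) := by
    have : (0:ℂ) = ∑ i ∈ s, inner ℂ (v i) (0 : G) := by simp
    rw [this]
    refine tendsto_finsetSum _ fun i _ => ?_
    exact (tendsto_const_nhds.inner (h0 i))
  obtain ⟨N, hN⟩ := (Metric.tendsto_atTop.1 h1) (ε / 2) (by positivity)
  refine ⟨N, fun n hn => ?_⟩
  have hN := hN n hn
  rw [dist_zero_right] at hN ⊢
  set w : lp (fun _ : ι => G) 2 := ∑ i ∈ s, lp.single 2 i (v i) with hw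
  have e1 : inner ℂ w (u n) = ∑ i ∈ s, inner ℂ (v i) (u n i) := by
    rw [hw, sum_inner]
    refine Finset.sum_congr rfl fun i _ => ?_
    exact lp.inner_single_left (𝕜 := ℂ) i (v i) (u n)
  have e2 : inner ℂ v (u n) = inner ℂ w (u n) + inner ℂ (v - w) (u n) := by
    rw [← inner_add_left]; simp
  rw [e2, e1]
  have e3 : ‖inner ℂ (v - w) (u n)‖ ≤ ε / (2 * (M + 1)) * M := by
    refine (norm_inner_le_norm _ _).trans ?_
    rw [dist_comm, dist_eq_norm] at hs
    exact mul_le_mul hs.le (hM n) (norm_nonneg _) (by positivity)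
  have e4 : ε / (2 * (M + 1)) * M < ε / 2 := by
    rw [div_mul_eq_mul_div, div_lt_div_iff₀ (by positivity) (by positivity)]
    nlinarith
  refine (norm_add_le _ _).trans_lt ?_
  linarith

lemma mazur {E : Type*} [NormedAddCommGroup E] [InnerProductSpace ℂ E] [CompleteSpace E]
    (u : ℕ → E) (hw : ∀ v, Tendsto (fun n => inner ℂ v (u n)) atTop (𝓝 0)) (n0 : ℕ)
    (η : ℝ) (hη : 0 < η) :
    ∃ (J : Type) (_ : Fintype J) (c : J → ℝ) (m : J → ℕ), (∀ j, 0 ≤ c j) ∧ ∑ j, c j = 1 ∧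
      (∀ j, n0 ≤ m j) ∧ ‖∑ j, (c j : ℂ) • u (m j)‖ < η := by
  set C : Set E := convexHull ℝ (Set.image u (Set.Ici n0)) with hC
  have h0 : (0 : E) ∈ closure C := by
    by_contra hcon
    obtain ⟨f, t, hf0, hf⟩ := RCLike.geometric_hahn_banach_point_closed (𝕜 := ℂ)
      (convex_convexHull ℝ (Set.image u (Set.Ici n0))).closure isClosed_closure hcon
    simp only [map_zero] at hf0
    have h1 := hw ((InnerProductSpace.toDual ℂ E).symm f)
    simp only [InnerProductSpace.toDual_symm_apply] at h1
    have h2 := (RCLike.continuous_re (K := ℂ)).tendsto 0 |>.comp h1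
    simp only [map_zero] at h2
    have h3 : t ≤ 0 := by
      refine ge_of_tendsto h2 ?_
      filter_upwards [eventually_ge_atTop n0] with n hn
      exact (hf (u n) (subset_closure (subset_convexHull ℝ _ ⟨n, hn, rfl⟩))).le
    linarith
  obtain ⟨y, hy, hyd⟩ := Metric.mem_closure_iff.1 h0 η hη
  rw [hC, mem_convexHull_iff_exists_fintype] at hy
  obtain ⟨J, hJ, w, z, hw0, hw1, hz, hsum⟩ := hy
  choose m hm hmz using hz
  refine ⟨J, hJ, w, m, hw0, hw1, fun j => hm _, ?_⟩
  rw [dist_zero_left, ← hsum] at hyd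
  have heq : ∑ j, (w j : ℂ) • u (m j) = ∑ i, w i • z i := by
    refine Finset.sum_congr rfl fun j _ => ?_
    simp [hmz]
  rw [heq]; exact hyd

end HS
section Abs

variable {H G : Type*} [NormedAddCommGroup H] [InnerProductSpace ℂ H]
  [NormedAddCommGroup G] [InnerProductSpace ℂ G] {ι K : Type*}

lemma summ_mul (Ca Cb : K → ℝ) (hCa : Summable fun k => Ca k ^ 2)
    (hCb : Summable fun k => Cb k ^ 2) : Summable fun k => Ca k * Cb k := by
  refine Summable.of_norm_bounded (hCa.add hCb) fun k => ?_
  rw [Real.norm_eq_abs, abs_le]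
  constructor <;> nlinarith [sq_nonneg (Ca k + Cb k), sq_nonneg (Ca k - Cb k)]

lemma summ_op [CompleteSpace G] (A : K → H →L[ℂ] H) (B : K → G →L[ℂ] G) (Ca Cb : K → ℝ)
    (hA : ∀ k, ‖A k‖ ≤ Ca k) (hB : ∀ k, ‖B k‖ ≤ Cb k)
    (hCa : Summable fun k => Ca k ^ 2) (hCb : Summable fun k => Cb k ^ 2) (T : H →L[ℂ] G) :
    Summable fun k => B k ∘L T ∘L A k := by
  refine Summable.of_norm_bounded ((summ_mul Ca Cb hCa hCb).mul_left ‖T‖) fun k => ?_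
  calc ‖B k ∘L T ∘L A k‖ ≤ ‖B k‖ * (‖T‖ * ‖A k‖) :=
        (opNorm_comp_le _ _).trans (by gcongr; exact opNorm_comp_le _ _)
    _ ≤ Cb k * (‖T‖ * Ca k) := by
        gcongr
        · exact (norm_nonneg _).trans (hB k)
        · exact hB k
        · exact hA k
    _ = _ := by ring

lemma op_hasSum [CompleteSpace G] (A : K → H →L[ℂ] H) (B : K → G →L[ℂ] G) (Ca Cb : K → ℝ)
    (hA : ∀ k, ‖A k‖ ≤ Ca k) (hB : ∀ k, ‖B k‖ ≤ Cb k)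
    (hCa : Summable fun k => Ca k ^ 2) (hCb : Summable fun k => Cb k ^ 2) (T : H →L[ℂ] G)
    (e : H) :
    HasSum (fun k => B k (T (A k e))) ((∑' k, B k ∘L T ∘L A k) e) :=
  (summ_op A B Ca Cb hA hB hCa hCb T).hasSum.mapL (ContinuousLinearMap.apply ℂ G e)

lemma cauchy (B : K → G →L[ℂ] G) (Cb : K → ℝ) (hB : ∀ k, ‖B k‖ ≤ Cb k)
    (hCb : Summable fun k => Cb k ^ 2) (T : H →L[ℂ] G) (x : K → H) (y : G)
    (hy : HasSum (fun k => B k (T (x k))) y) :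
    ‖y‖ₑ ^ 2 ≤ ENNReal.ofReal ((∑' k, Cb k ^ 2) * ‖T‖ ^ 2 + 1) * ∑' k, ‖x k‖ₑ ^ 2 := by
  by_cases htop : ∑' k, ‖x k‖ₑ ^ 2 = ⊤
  · rw [htop, ENNReal.mul_top]
    · exact le_top
    · have : 0 ≤ ∑' k, Cb k ^ 2 := tsum_nonneg fun k => sq_nonneg _
      simp only [ne_eq, ENNReal.ofReal_eq_zero, not_le]
      positivity
  have hs : Summable fun k => ‖x k‖ ^ 2 := by
    simpa using ENNReal.summable_toReal htop
  have hXe : ∑' k, ‖x k‖ₑ ^ 2 = ENNReal.ofReal (∑' k, ‖x k‖ ^ 2) := by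
    rw [ENNReal.ofReal_tsum_of_nonneg (fun i => by positivity) hs]
    simp only [ENNReal.ofReal_pow (norm_nonneg _), ofReal_norm]
  have hβ : 0 ≤ ∑' k, Cb k ^ 2 := tsum_nonneg fun k => sq_nonneg _
  have hX : 0 ≤ ∑' k, ‖x k‖ ^ 2 := tsum_nonneg fun k => sq_nonneg _
  have key : ‖y‖ ^ 2 ≤ ((∑' k, Cb k ^ 2) * ‖T‖ ^ 2) * ∑' k, ‖x k‖ ^ 2 := by
    refine le_of_tendsto ((hy.norm).pow 2) (Eventually.of_forall fun F => ?_)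
    have h1 : ‖∑ k ∈ F, B k (T (x k))‖ ≤ ∑ k ∈ F, Cb k * (‖T‖ * ‖x k‖) := by
      refine norm_sum_le_of_le _ fun k _ => ?_
      refine (le_opNorm _ _).trans ?_
      have := (norm_nonneg _).trans (hB k)
      gcongr
      · exact hB k
      · exact le_opNorm _ _
    calc ‖∑ k ∈ F, B k (T (x k))‖ ^ 2 ≤ (∑ k ∈ F, Cb k * (‖T‖ * ‖x k‖)) ^ 2 := by gcongr
      _ ≤ (∑ k ∈ F, Cb k ^ 2) * ∑ k ∈ F, (‖T‖ * ‖x k‖) ^ 2 := Finset.sum_mul_sq_le_sq_mul_sq _ _ _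
      _ = (∑ k ∈ F, Cb k ^ 2) * (‖T‖ ^ 2 * ∑ k ∈ F, ‖x k‖ ^ 2) := by
          simp only [mul_pow, Finset.mul_sum]
      _ ≤ (∑' k, Cb k ^ 2) * (‖T‖ ^ 2 * ∑' k, ‖x k‖ ^ 2) := by
          gcongr
          · exact hCb.sum_le_tsum _ fun k _ => sq_nonneg _
          · exact hs.sum_le_tsum _ fun k _ => sq_nonneg _
      _ = _ := by ring
  rw [hXe, ← ENNReal.ofReal_mul (by positivity), ← ofReal_norm, ← ENNReal.ofReal_pow (norm_nonneg _)]
  refine ENNReal.ofReal_le_ofReal (key.trans ?_)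
  gcongr
  linarith

lemma sumR1_apply {P : Type*} (F : Finset P) (bas : HilbertBasis ι ℂ H) (x : P → H) (y : P → G) (i : ι) :
    (∑ p ∈ F, R1 bas (x p) (y p)) i = ∑ p ∈ F, inner ℂ (x p) (bas i) • y p := by
  rw [lp.coeFn_sum, Finset.sum_apply]
  simp only [R1_apply]

lemma sumR1_norm {P : Type*} [Fintype P] (bas : HilbertBasis ι ℂ H) (x : P → H) (y : P → G)
    (h : ∀ p q, p ≠ q → inner ℂ (x q) (x p) * inner ℂ (y p) (y q) = 0) :
    ‖∑ p, R1 bas (x p) (y p)‖ ^ 2 = ∑ p, (‖x p‖ * ‖y p‖) ^ 2 := by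
  classical
  have h1 : inner ℂ (∑ p, R1 bas (x p) (y p)) (∑ p, R1 bas (x p) (y p))
      = ((∑ p, (‖x p‖ * ‖y p‖) ^ 2 : ℝ) : ℂ) := by
    rw [sum_inner]
    push_cast
    refine Finset.sum_congr rfl fun p _ => ?_
    rw [inner_sum, Finset.sum_eq_single p]
    · rw [inner_self_eq_norm_sq_to_K, R1_norm]; push_cast; rfl
    · intro q _ hq; rw [R1_inner]; exact h p q (Ne.symm hq)
    · simp
  rw [inner_self_eq_norm_sq_to_K] at h1
  apply Complex.ofReal_injective
  rw [← h1]
  push_cast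
  rfl

lemma fin_rank [CompleteSpace G] (bas : HilbertBasis ι ℂ H)
    (A A' : K → H →L[ℂ] H) (B B' : K → G →L[ℂ] G) (Ca Cb : K → ℝ)
    (hA : ∀ k, ‖A k‖ ≤ Ca k) (hA' : ∀ k, ‖A' k‖ ≤ Ca k)
    (hB : ∀ k, ‖B k‖ ≤ Cb k) (hB' : ∀ k, ‖B' k‖ ≤ Cb k)
    (hCa : Summable fun k => Ca k ^ 2) (hCb : Summable fun k => Cb k ^ 2)
    (adj : ∀ k x y, inner ℂ (A' k x) y = inner ℂ x (A k y))
    (nA : ∀ k l x y, inner ℂ (A' k x) (A' l y) = inner ℂ (A l x) (A k y))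
    (nB : ∀ k l x y, inner ℂ (B' k x) (B' l y) = inner ℂ (B l x) (B k y))
    {P : Type*} [Fintype P] (v : P → H) (s : P → G) (S : H →L[ℂ] G)
    (hS : ∀ e, S e = ∑ p, inner ℂ (v p) e • s p) :
    ∃ z z' : lp (fun _ : ι => G) 2, (∀ i, z i = (∑' k, B k ∘L S ∘L A k) (bas i)) ∧
      (∀ i, z' i = (∑' k, B' k ∘L S ∘L A' k) (bas i)) ∧ ‖z‖ = ‖z'‖ := by
  have adj' : ∀ k x y, inner ℂ (A k x) y = inner ℂ x (A' k y) := fun k x y => by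
    rw [← inner_conj_symm, ← adj, inner_conj_symm]
  -- a general summability statement
  have gen : ∀ (A A' : K → H →L[ℂ] H) (B : K → G →L[ℂ] G),
      (∀ k, ‖A k‖ ≤ Ca k) → (∀ k, ‖A' k‖ ≤ Ca k) → (∀ k, ‖B k‖ ≤ Cb k) →
      (∀ k x y, inner ℂ (A' k x) y = inner ℂ x (A k y)) →
      ∃ z : lp (fun _ : ι => G) 2,
        HasSum (fun k => ∑ p, R1 bas (A' k (v p)) (B k (s p))) z ∧
        ∀ i, z i = (∑' k, B k ∘L S ∘L A k) (bas i) := by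
    intro A A' B hA hA' hB adj
    have hsum : Summable (fun k => ∑ p, R1 bas (A' k (v p)) (B k (s p))) := by
      refine Summable.of_norm_bounded
        ((summ_mul Ca Cb hCa hCb).mul_right (∑ p, ‖v p‖ * ‖s p‖)) fun k => ?_
      rw [Finset.mul_sum]
      refine norm_sum_le_of_le _ fun p _ => ?_
      rw [R1_norm]
      calc ‖A' k (v p)‖ * ‖B k (s p)‖ ≤ (Ca k * ‖v p‖) * (Cb k * ‖s p‖) := by
            have := (norm_nonneg _).trans (hA' k)
            gcongr
            · exact le_of_opNorm_le _ (hA' k) _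
            · exact le_of_opNorm_le _ (hB k) _
        _ = _ := by ring
    refine ⟨_, hsum.hasSum, fun i => ?_⟩
    have h1 := op_hasSum A B Ca Cb hA hB hCa hCb S (bas i)
    have h2 : HasSum (fun k => (∑ p, R1 bas (A' k (v p)) (B k (s p))) i)
        ((∑' k, ∑ p, R1 bas (A' k (v p)) (B k (s p))) i) :=
      hsum.hasSum.mapL (lp.evalCLM ℂ (fun _ : ι => G) 2 i)
    refine h2.unique (h1.congr_fun ?_ |> id)
    intro k
    rw [sumR1_apply, hS, map_sum]
    refine Finset.sum_congr rfl fun p _ => ?_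
    rw [map_smul, adj]
  obtain ⟨z, hz, hz1⟩ := gen A A' B hA hA' hB adj
  obtain ⟨z', hz', hz1'⟩ := gen A' A B' hA' hA hB' adj'
  refine ⟨z, z', hz1, hz1', ?_⟩
  refine tendsto_nhds_unique hz.norm ?_
  refine hz'.norm.congr fun F => ?_
  have key : inner ℂ (∑ k ∈ F, ∑ p, R1 bas (A k (v p)) (B' k (s p)))
        (∑ k ∈ F, ∑ p, R1 bas (A k (v p)) (B' k (s p)))
      = inner ℂ (∑ k ∈ F, ∑ p, R1 bas (A' k (v p)) (B k (s p)))
        (∑ k ∈ F, ∑ p, R1 bas (A' k (v p)) (B k (s p))) := by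
    simp only [sum_inner, inner_sum, R1_inner]
    have comm4 : ∀ f : K → P → K → P → ℂ,
        ∑ k ∈ F, ∑ p, ∑ l ∈ F, ∑ q, f k p l q = ∑ k ∈ F, ∑ l ∈ F, ∑ p, ∑ q, f k p l q :=
      fun f => Finset.sum_congr rfl fun k _ => Finset.sum_comm
    rw [comm4, comm4, Finset.sum_comm]
    refine Finset.sum_congr rfl fun k _ => Finset.sum_congr rfl fun l _ =>
      Finset.sum_congr rfl fun p _ => Finset.sum_congr rfl fun q _ => ?_
    rw [nA, nB]
  rw [inner_self_eq_norm_sq_to_K, inner_self_eq_norm_sq_to_K] at key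
  exact (pow_left_inj₀ (norm_nonneg _) (norm_nonneg _) two_ne_zero).1 (by exact_mod_cast key)

end Abs
section Main

variable {H G : Type*} [NormedAddCommGroup H] [InnerProductSpace ℂ H]
  [NormedAddCommGroup G] [InnerProductSpace ℂ G] {ι K : Type*}

/-- the finite rank operator `e ↦ ∑ ⟪v l, e⟫ v l` -/
noncomputable def Pj {L : Type*} [Fintype L] (v : L → H) : H →L[ℂ] H :=
  ∑ l, (innerSL ℂ (v l)).smulRight (v l)

lemma Pj_apply {L : Type*} [Fintype L] (v : L → H) (e : H) :
    Pj v e = ∑ l, inner ℂ (v l) e • v l := by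
  simp [Pj]

lemma Pj_norm {L : Type*} [Fintype L] (v : L → H) (hv : Orthonormal ℂ v) (e : H) :
    ‖Pj v e‖ ≤ ‖e‖ := by
  have h1 : ‖Pj v e‖ ^ 2 = ∑ l, ‖inner ℂ (v l) e‖ ^ 2 := by
    have h2 : inner ℂ (Pj v e) (Pj v e) = ((∑ l, ‖inner ℂ (v l) e‖ ^ 2 : ℝ) : ℂ) := by
      rw [Pj_apply, hv.inner_sum]
      push_cast
      refine Finset.sum_congr rfl fun l _ => ?_
      rw [mul_comm, RCLike.mul_conj]; rfl
    rw [inner_self_eq_norm_sq_to_K] at h2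
    apply Complex.ofReal_injective
    rw [← h2]; push_cast; rfl
  have h3 := hv.sum_inner_products_le (x := e) (s := Finset.univ)
  exact (pow_le_pow_iff_left₀ (norm_nonneg _) (norm_nonneg _) two_ne_zero).1 (h1.trans_le h3)

/-- The data of an approximation. -/
structure Data {L : Type} [Fintype L] (A A' : K → H →L[ℂ] H) (v : L → H)
    (δ δ' : K → H →L[ℂ] H) (c : L → K → ℂ) (ε : ℝ) (C : ℝ≥0∞) : Prop where
  on : Orthonormal ℂ v
  eig : ∀ k l, A k (v l) = δ k (v l) + c l k • v l
  eig' : ∀ k l, A' k (v l) = δ' k (v l) + (starRingEnd ℂ) (c l k) • v l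
  adjδ : ∀ k x y, inner ℂ (δ' k x) y = inner ℂ x (δ k y)
  sm : ∀ g, ∑' k, ‖δ k g‖ₑ ^ 2 ≤ ENNReal.ofReal (ε ^ 2) * ‖g‖ₑ ^ 2
  sm' : ∀ g, ∑' k, ‖δ' k g‖ₑ ^ 2 ≤ ENNReal.ofReal (ε ^ 2) * ‖g‖ₑ ^ 2
  bd : ∑ l, ∑' k, ‖δ k (v l)‖ₑ ^ 2 ≤ C
  bd' : ∑ l, ∑' k, ‖δ' k (v l)‖ₑ ^ 2 ≤ C

lemma Data.symm {L : Type} [Fintype L] {A A' : K → H →L[ℂ] H} {v : L → H}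
    {δ δ' : K → H →L[ℂ] H} {c : L → K → ℂ} {ε : ℝ} {C : ℝ≥0∞} (h : Data A A' v δ δ' c ε C) :
    Data A' A v δ' δ (fun l k => (starRingEnd ℂ) (c l k)) ε C where
  on := h.on
  eig := h.eig'
  eig' := fun k l => by rw [Complex.conj_conj]; exact h.eig k l
  adjδ := fun k x y => by rw [← inner_conj_symm, ← h.adjδ, inner_conj_symm]
  sm := h.sm'
  sm' := h.sm
  bd := h.bd'
  bd' := h.bd

def Approx (bas : HilbertBasis ι ℂ H) (A A' : K → H →L[ℂ] H) : Prop :=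
  ∀ I : Finset ι, ∃ C : ℝ≥0∞, C ≠ ⊤ ∧ ∀ ε : ℝ, 0 < ε →
    ∃ (L : Type) (_ : Fintype L) (v : L → H) (δ δ' : K → H →L[ℂ] H) (c : L → K → ℂ),
      Data A A' v δ δ' c ε C ∧ ∀ i ∈ I, ‖Pj v (bas i) - bas i‖ ≤ ε

lemma Approx.symm {bas : HilbertBasis ι ℂ H} {A A' : K → H →L[ℂ] H} (h : Approx bas A A') :
    Approx bas A' A := by
  intro I
  obtain ⟨C, hC, h⟩ := h I
  refine ⟨C, hC, fun ε hε => ?_⟩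
  obtain ⟨L, hL, v, δ, δ', c, hd, hi⟩ := h ε hε
  exact ⟨L, hL, v, δ', δ, _, hd.symm, hi⟩

lemma Data.comm {L : Type} [Fintype L] {A A' : K → H →L[ℂ] H} {v : L → H}
    {δ δ' : K → H →L[ℂ] H} {c : L → K → ℂ} {ε : ℝ} {C : ℝ≥0∞} (h : Data A A' v δ δ' c ε C)
    (adj : ∀ k x y, inner ℂ (A' k x) y = inner ℂ x (A k y)) (k : K) (e : H) :
    Pj v (A k e) - A k (Pj v e) = Pj v (δ k e) - δ k (Pj v e) := by
  rw [sub_eq_sub_iff_sub_eq_sub]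
  simp only [Pj_apply, map_sum, map_smul, ← Finset.sum_sub_distrib]
  refine Finset.sum_congr rfl fun l _ => ?_
  rw [← sub_smul, ← smul_sub, ← adj, ← h.adjδ, ← inner_sub_left, h.eig, h.eig']
  simp only [add_sub_cancel_left, inner_smul_left, Complex.conj_conj, smul_smul]
  rw [mul_comm]

lemma esq_sub (x y : H) : ‖x - y‖ₑ ^ 2 ≤ 2 * (‖x‖ₑ ^ 2 + ‖y‖ₑ ^ 2) := by
  rw [← ofReal_norm, ← ofReal_norm, ← ofReal_norm, ← ENNReal.ofReal_pow (norm_nonneg _),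
    ← ENNReal.ofReal_pow (norm_nonneg _), ← ENNReal.ofReal_pow (norm_nonneg _),
    ← ENNReal.ofReal_add (by positivity) (by positivity),
    show (2 : ℝ≥0∞) = ENNReal.ofReal 2 by simp, ← ENNReal.ofReal_mul (by norm_num)]
  refine ENNReal.ofReal_le_ofReal ?_
  have h1 := norm_sub_le x y
  have h2 := norm_nonneg (x - y)
  nlinarith [sq_nonneg (‖x‖ - ‖y‖)]

lemma hs_sumR1 {P : Type*} [Fintype P] (bas : HilbertBasis ι ℂ H) (x : P → H) (y : P → G)
    (h : ∀ p q, p ≠ q → inner ℂ (x q) (x p) * inner ℂ (y p) (y q) = 0) :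
    ∑' i, ‖∑ p, inner ℂ (x p) (bas i) • y p‖ₑ ^ 2 = ∑ p, (‖x p‖ₑ * ‖y p‖ₑ) ^ 2 := by
  simp only [← sumR1_apply]
  rw [← lp_enorm_sq, ← ofReal_norm, ← ENNReal.ofReal_pow (norm_nonneg _), sumR1_norm bas x y h,
    ENNReal.ofReal_sum_of_nonneg (fun p _ => by positivity)]
  refine Finset.sum_congr rfl fun p _ => ?_
  rw [ENNReal.ofReal_pow (by positivity), ENNReal.ofReal_mul (by positivity), ofReal_norm,
    ofReal_norm]

lemma Data.est1 {L : Type} [Fintype L] {A A' : K → H →L[ℂ] H} {v : L → H}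
    {δ δ' : K → H →L[ℂ] H} {c : L → K → ℂ} {ε : ℝ} {C : ℝ≥0∞} (h : Data A A' v δ δ' c ε C)
    (bas : HilbertBasis ι ℂ H) :
    ∑' i, ∑' k, ‖Pj v (δ k (bas i)) - δ k (Pj v (bas i))‖ₑ ^ 2 ≤ 4 * C := by
  have on1 : ∀ l, ‖v l‖ₑ = 1 := fun l => by rw [← ofReal_norm, h.on.1 l]; simp
  calc ∑' i, ∑' k, ‖Pj v (δ k (bas i)) - δ k (Pj v (bas i))‖ₑ ^ 2
      ≤ ∑' i, ∑' k, 2 * (‖Pj v (δ k (bas i))‖ₑ ^ 2 + ‖δ k (Pj v (bas i))‖ₑ ^ 2) :=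
        ENNReal.tsum_le_tsum fun i => ENNReal.tsum_le_tsum fun k => esq_sub _ _
    _ = ∑' k, 2 * (∑' i, ‖Pj v (δ k (bas i))‖ₑ ^ 2 + ∑' i, ‖δ k (Pj v (bas i))‖ₑ ^ 2) := by
        rw [ENNReal.tsum_comm]
        simp only [ENNReal.tsum_mul_left, ENNReal.tsum_add]
    _ = ∑' k, 2 * (∑ l, ‖δ' k (v l)‖ₑ ^ 2 + ∑ l, ‖δ k (v l)‖ₑ ^ 2) := by
        refine tsum_congr fun k => ?_
        congr 2
        · have := hs_sumR1 bas (fun l => δ' k (v l)) v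
            (fun p q hpq => by rw [h.on.2 hpq, mul_zero])
          simp only [on1, mul_one, h.adjδ] at this
          rw [← this]
          simp only [Pj_apply]
        · have := hs_sumR1 bas v (fun l => δ k (v l))
            (fun p q hpq => by rw [h.on.2 hpq.symm, zero_mul])
          simp only [on1, one_mul] at this
          rw [← this]
          simp only [Pj_apply, map_sum, map_smul]
    _ = 2 * (∑ l, ∑' k, ‖δ' k (v l)‖ₑ ^ 2 + ∑ l, ∑' k, ‖δ k (v l)‖ₑ ^ 2) := by
        rw [ENNReal.tsum_mul_left, ENNReal.tsum_add,
          Summable.tsum_finsetSum (fun _ _ => ENNReal.summable),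
          Summable.tsum_finsetSum (fun _ _ => ENNReal.summable)]
    _ ≤ 2 * (C + C) := by
        gcongr
        · exact h.bd'
        · exact h.bd
    _ = 4 * C := by ring

lemma Data.est2 {L : Type} [Fintype L] {A A' : K → H →L[ℂ] H} {v : L → H}
    {δ δ' : K → H →L[ℂ] H} {c : L → K → ℂ} {ε : ℝ} {C : ℝ≥0∞} (h : Data A A' v δ δ' c ε C)
    (e : H) :
    ∑' k, ‖Pj v (δ k e) - δ k (Pj v e)‖ₑ ^ 2 ≤ 4 * ENNReal.ofReal (ε ^ 2) * ‖e‖ₑ ^ 2 := by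
  have hP : ∀ e, ‖Pj v e‖ₑ ≤ ‖e‖ₑ := fun e => by
    rw [← ofReal_norm, ← ofReal_norm]; exact ENNReal.ofReal_le_ofReal (Pj_norm v h.on e)
  calc ∑' k, ‖Pj v (δ k e) - δ k (Pj v e)‖ₑ ^ 2
      ≤ ∑' k, 2 * (‖δ k e‖ₑ ^ 2 + ‖δ k (Pj v e)‖ₑ ^ 2) := by
        refine ENNReal.tsum_le_tsum fun k => (esq_sub _ _).trans ?_
        gcongr
        exact hP _
    _ = 2 * (∑' k, ‖δ k e‖ₑ ^ 2 + ∑' k, ‖δ k (Pj v e)‖ₑ ^ 2) := by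
        rw [ENNReal.tsum_mul_left, ENNReal.tsum_add]
    _ ≤ 2 * (ENNReal.ofReal (ε ^ 2) * ‖e‖ₑ ^ 2 + ENNReal.ofReal (ε ^ 2) * ‖e‖ₑ ^ 2) := by
        gcongr
        · exact h.sm e
        · refine (h.sm _).trans ?_
          gcongr
          exact hP e
    _ = _ := by ring

lemma Data.err [CompleteSpace G] {L : Type} [Fintype L] {A A' : K → H →L[ℂ] H} {v : L → H}
    {δ δ' : K → H →L[ℂ] H} {c : L → K → ℂ} {ε : ℝ} {C : ℝ≥0∞} (h : Data A A' v δ δ' c ε C)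
    (adj : ∀ k x y, inner ℂ (A' k x) y = inner ℂ x (A k y))
    (B : K → G →L[ℂ] G) (Ca Cb : K → ℝ)
    (hA : ∀ k, ‖A k‖ ≤ Ca k) (hB : ∀ k, ‖B k‖ ≤ Cb k)
    (hCa : Summable fun k => Ca k ^ 2) (hCb : Summable fun k => Cb k ^ 2)
    (T : H →L[ℂ] G) (e : H) :
    ‖(∑' k, B k ∘L (T ∘L Pj v) ∘L A k) e - (∑' k, B k ∘L T ∘L A k) (Pj v e)‖ₑ ^ 2 ≤
      ENNReal.ofReal ((∑' k, Cb k ^ 2) * ‖T‖ ^ 2 + 1) *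
        ∑' k, ‖Pj v (δ k e) - δ k (Pj v e)‖ₑ ^ 2 := by
  refine cauchy B Cb hB hCb T _ _ ?_
  have h1 := op_hasSum A B Ca Cb hA hB hCa hCb (T ∘L Pj v) e
  have h2 := op_hasSum A B Ca Cb hA hB hCa hCb T (Pj v e)
  refine (h1.sub h2).congr_fun ?_ |> id
  intro k
  rw [← h.comm adj]
  simp

lemma right_ideal {L : Type*} [Fintype L] {v : L → H} (hv : Orthonormal ℂ v)
    (bas : HilbertBasis ι ℂ H) (S : H →L[ℂ] G) (u : lp (fun _ : ι => G) 2)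
    (hu : ∀ i, u i = S (bas i)) :
    ∃ y : lp (fun _ : ι => G) 2, (∀ i, y i = S (Pj v (bas i))) ∧ ‖y‖ ≤ ‖u‖ := by
  refine ⟨∑ l, R1 bas (v l) (S (v l)), fun i => ?_, ?_⟩
  · rw [sumR1_apply, Pj_apply]; simp only [map_sum, map_smul]
  · set y := ∑ l, R1 bas (v l) (S (v l)) with hy
    have h1 : inner ℂ y u = ((∑ l, ‖S (v l)‖ ^ 2 : ℝ) : ℂ) := by
      rw [hy, sum_inner]
      push_cast
      refine Finset.sum_congr rfl fun l _ => ?_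
      rw [R1_inner_rep bas _ _ S u hu, inner_self_eq_norm_sq_to_K]; rfl
    have h2 : ‖y‖ ^ 2 = ∑ l, ‖S (v l)‖ ^ 2 := by
      rw [hy, sumR1_norm _ _ _ (fun p q hpq => by rw [hv.2 hpq.symm, zero_mul])]
      simp only [hv.1, one_mul]
    have h3 : ‖y‖ ^ 2 ≤ ‖y‖ * ‖u‖ := by
      have := norm_inner_le_norm (𝕜 := ℂ) y u
      rw [h1, ← h2, Complex.norm_real, Real.norm_of_nonneg (by positivity)] at this
      exact this
    rcases (norm_nonneg y).eq_or_lt with h0 | h0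
    · rw [← h0]; exact norm_nonneg _
    · rw [pow_two] at h3; exact le_of_mul_le_mul_left h3 h0

end Main
section Main2

variable {H G : Type*} [NormedAddCommGroup H] [InnerProductSpace ℂ H]
  [NormedAddCommGroup G] [InnerProductSpace ℂ G] {ι K : Type*}

lemma Data.err2 [CompleteSpace G] {L : Type} [Fintype L] {A A' : K → H →L[ℂ] H} {v : L → H}
    {δ δ' : K → H →L[ℂ] H} {c : L → K → ℂ} {ε : ℝ} {C : ℝ≥0∞} (h : Data A A' v δ δ' c ε C)
    (hε : 0 ≤ ε)
    (adj : ∀ k x y, inner ℂ (A' k x) y = inner ℂ x (A k y))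
    (B : K → G →L[ℂ] G) (Ca Cb : K → ℝ)
    (hA : ∀ k, ‖A k‖ ≤ Ca k) (hB : ∀ k, ‖B k‖ ≤ Cb k)
    (hCa : Summable fun k => Ca k ^ 2) (hCb : Summable fun k => Cb k ^ 2)
    (T : H →L[ℂ] G) (e : H) :
    ‖(∑' k, B k ∘L (T ∘L Pj v) ∘L A k) e - (∑' k, B k ∘L T ∘L A k) (Pj v e)‖ ≤
      2 * √((∑' k, Cb k ^ 2) * ‖T‖ ^ 2 + 1) * ε * ‖e‖ := by
  have h1 := (h.err adj B Ca Cb hA hB hCa hCb T e).trans (mul_le_mul_right (h.est2 e) _)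
  have hβ : 0 ≤ ∑' k, Cb k ^ 2 := tsum_nonneg fun k => sq_nonneg _
  set b := (∑' k, Cb k ^ 2) * ‖T‖ ^ 2 + 1 with hb
  have hb0 : 0 ≤ b := by positivity
  rw [← ofReal_norm, ← ofReal_norm, ← ENNReal.ofReal_pow (norm_nonneg _),
    ← ENNReal.ofReal_pow (norm_nonneg _), show (4 : ℝ≥0∞) = ENNReal.ofReal 4 by simp,
    ← ENNReal.ofReal_mul (by positivity), ← ENNReal.ofReal_mul (by positivity),
    ← ENNReal.ofReal_mul (by positivity), ENNReal.ofReal_le_ofReal_iff (by positivity)] at h1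
  refine (pow_le_pow_iff_left₀ (norm_nonneg _) (by positivity) two_ne_zero).1 (h1.trans_eq ?_)
  simp only [mul_pow, Real.sq_sqrt hb0]
  ring

theorem abs_le [CompleteSpace G] (bas : HilbertBasis ι ℂ H)
    (A A' : K → H →L[ℂ] H) (B B' : K → G →L[ℂ] G) (Ca Cb : K → ℝ)
    (hA : ∀ k, ‖A k‖ ≤ Ca k) (hA' : ∀ k, ‖A' k‖ ≤ Ca k)
    (hB : ∀ k, ‖B k‖ ≤ Cb k) (hB' : ∀ k, ‖B' k‖ ≤ Cb k)
    (hCa : Summable fun k => Ca k ^ 2) (hCb : Summable fun k => Cb k ^ 2)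
    (adj : ∀ k x y, inner ℂ (A' k x) y = inner ℂ x (A k y))
    (nA : ∀ k l x y, inner ℂ (A' k x) (A' l y) = inner ℂ (A l x) (A k y))
    (nB : ∀ k l x y, inner ℂ (B' k x) (B' l y) = inner ℂ (B l x) (B k y))
    (happ : Approx bas A A') (T : H →L[ℂ] G) :
    hsNormSq bas (∑' k, B' k ∘L T ∘L A' k) ≤ hsNormSq bas (∑' k, B k ∘L T ∘L A k) := by
  by_cases htop : hsNormSq bas (∑' k, B k ∘L T ∘L A k) = ⊤
  · rw [htop]; exact le_top
  have adj' : ∀ k x y, inner ℂ (A k x) y = inner ℂ x (A' k y) := fun k x y => by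
    rw [← inner_conj_symm, ← adj, inner_conj_symm]
  obtain ⟨u0, hu0⟩ := hs_rep bas _ htop
  rw [hs_eq bas _ u0 hu0, hsNormSq, ENNReal.tsum_eq_iSup_sum]
  refine iSup_le fun I => ?_
  set Dt := ∑' k, B' k ∘L T ∘L A' k with hDt
  suffices hmain : ∑ i ∈ I, ‖Dt (bas i)‖ ^ 2 ≤ ‖u0‖ ^ 2 by
    have h := ENNReal.ofReal_le_ofReal hmain
    rw [ENNReal.ofReal_sum_of_nonneg (fun i _ => by positivity)] at h
    simp only [ENNReal.ofReal_pow (norm_nonneg _), ofReal_norm] at h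
    exact h
  obtain ⟨C, hC, happ⟩ := happ I
  choose L hL v δ δ' c hd hi using fun n : ℕ => happ (1 / ((n : ℝ) + 1)) Nat.one_div_pos_of_nat
  set b := (∑' k, Cb k ^ 2) * ‖T‖ ^ 2 + 1 with hb
  -- the error vectors
  have herr : ∀ n, ∑' i, ‖(∑' k, B k ∘L (T ∘L Pj (v n)) ∘L A k) (bas i)
      - (∑' k, B k ∘L T ∘L A k) (Pj (v n) (bas i))‖ₑ ^ 2 ≤ ENNReal.ofReal b * (4 * C) := by
    intro n
    refine (ENNReal.tsum_le_tsum fun i =>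
      (hd n).err adj B Ca Cb hA hB hCa hCb T (bas i)).trans ?_
    rw [ENNReal.tsum_mul_left]
    gcongr
    exact (hd n).est1 bas
  have hMtop : ENNReal.ofReal b * (4 * C) ≠ ⊤ :=
    ENNReal.mul_ne_top ENNReal.ofReal_ne_top (ENNReal.mul_ne_top (by simp) hC)
  choose u hu using fun n => lp_mk (F := G) _ (ne_top_of_le_ne_top hMtop (herr n))
  have hub : ∀ n, ‖u n‖ ≤ √(ENNReal.ofReal b * (4 * C)).toReal := by
    intro n
    have h1 : ‖u n‖ₑ ^ 2 ≤ ENNReal.ofReal b * (4 * C) := by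
      rw [lp_enorm_sq]; simp only [hu]; exact herr n
    apply Real.le_sqrt_of_sq_le
    have := ENNReal.toReal_mono hMtop h1
    simpa using this
  have hlim : Tendsto (fun n : ℕ => 1 / ((n : ℝ) + 1)) atTop (𝓝 0) :=
    tendsto_one_div_add_atTop_nhds_zero_nat
  have hu00 : ∀ i, Tendsto (fun n => u n i) atTop (𝓝 0) := by
    intro i
    refine squeeze_zero_norm (a := fun n : ℕ => 2 * √b * (1 / ((n : ℝ) + 1)) * ‖bas i‖)
      (fun n => ?_) ?_
    · rw [hu]
      exact (hd n).err2 Nat.one_div_pos_of_nat.le adj B Ca Cb hA hB hCa hCb T (bas i)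
    · simpa using (hlim.const_mul (2 * √b)).mul_const ‖bas i‖
  have hweak := weak_zero u _ hub hu00
  have step : ∀ n : ℕ, ∃ g : ι → G,
      (∑ i ∈ I, ‖g i‖ ^ 2 ≤ (‖u0‖ + 1 / ((n : ℝ) + 1)) ^ 2) ∧
      ∀ i ∈ I, ‖g i - Dt (bas i)‖ ≤ (2 * √b + ‖Dt‖) * (1 / ((n : ℝ) + 1)) := by
    intro n
    obtain ⟨J, hJ, w, m, hw0, hw1, hm, hsmall⟩ :=
      mazur u hweak n (1 / ((n : ℝ) + 1)) Nat.one_div_pos_of_nat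
    set S : H →L[ℂ] G := T ∘L ∑ j, (w j : ℂ) • Pj (v (m j)) with hSdef
    have hSe : ∀ e, S e = ∑ j, (w j : ℂ) • T (Pj (v (m j)) e) := by
      intro e
      simp [hSdef]
    have hS : ∀ e, S e = ∑ p : (Σ j : J, L (m j)),
        inner ℂ (v (m p.1) p.2) e • ((w p.1 : ℂ) • T (v (m p.1) p.2)) := by
      intro e
      rw [hSe, Fintype.sum_sigma]
      refine Finset.sum_congr rfl fun j _ => ?_
      rw [Pj_apply, map_sum, Finset.smul_sum]
      refine Finset.sum_congr rfl fun l _ => ?_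
      rw [map_smul, smul_comm]
    obtain ⟨z, z', hz, hz', hzz⟩ := fin_rank bas A A' B B' Ca Cb hA hA' hB hB' hCa hCb adj nA nB
      (fun p : (Σ j : J, L (m j)) => v (m p.1) p.2)
      (fun p => (w p.1 : ℂ) • T (v (m p.1) p.2)) S hS
    have lin : ∀ (A : K → H →L[ℂ] H) (B : K → G →L[ℂ] G), (∀ k, ‖A k‖ ≤ Ca k) →
        (∀ k, ‖B k‖ ≤ Cb k) → ∀ e, (∑' k, B k ∘L S ∘L A k) e =
          ∑ j, (w j : ℂ) • (∑' k, B k ∘L (T ∘L Pj (v (m j))) ∘L A k) e := by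
      intro A B hA hB e
      refine (op_hasSum A B Ca Cb hA hB hCa hCb S e).unique ?_
      have := hasSum_sum (s := Finset.univ) fun j (_ : j ∈ Finset.univ) =>
        (op_hasSum A B Ca Cb hA hB hCa hCb (T ∘L Pj (v (m j))) e).const_smul (w j : ℂ)
      refine this.congr_fun ?_ |> id
      intro k
      rw [hSe, map_sum]
      simp only [map_smul]
      rfl
    refine ⟨fun i => z' i, ?_, ?_⟩
    · have h1 : ∑ i ∈ I, ‖z' i‖ ^ 2 ≤ ‖z'‖ ^ 2 := by
        have := lp.sum_rpow_le_norm_rpow (p := 2) (by norm_num) z' I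
        simpa using this
      refine h1.trans ?_
      rw [← hzz]
      gcongr
      choose y hy hyn using fun j => right_ideal (hd (m j)).on bas _ u0 hu0
      have hzd : z = ∑ j, (w j : ℂ) • y j + ∑ j, (w j : ℂ) • u (m j) := by
        ext i
        rw [hz, lin A B hA hB, lp.coeFn_add, Pi.add_apply, lp.coeFn_sum, lp.coeFn_sum,
          Finset.sum_apply, Finset.sum_apply, ← Finset.sum_add_distrib]
        refine Finset.sum_congr rfl fun j _ => ?_
        rw [lp.coeFn_smul, lp.coeFn_smul, Pi.smul_apply, Pi.smul_apply, hy, hu, ← smul_add]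
        congr 1
        abel
      rw [hzd]
      refine (norm_add_le _ _).trans (add_le_add ?_ hsmall.le)
      calc ‖∑ j, (w j : ℂ) • y j‖ ≤ ∑ j, w j * ‖u0‖ := by
            refine norm_sum_le_of_le _ fun j _ => ?_
            rw [norm_smul, Complex.norm_real, Real.norm_of_nonneg (hw0 j)]
            exact mul_le_mul_of_nonneg_left (hyn j) (hw0 j)
        _ = ‖u0‖ := by rw [← Finset.sum_mul, hw1, one_mul]
    · intro i hiI
      have h1 : Dt (bas i) = ∑ j, (w j : ℂ) • Dt (bas i) := by
        rw [← Finset.sum_smul]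
        have : (∑ j, (w j : ℂ)) = 1 := by exact_mod_cast hw1
        rw [this, one_smul]
      beta_reduce
      rw [hz', lin A' B' hA' hB', h1, ← Finset.sum_sub_distrib]
      have hn : ∀ j, 1 / ((m j : ℝ) + 1) ≤ 1 / ((n : ℝ) + 1) := fun j =>
        Nat.one_div_le_one_div (hm j)
      have hbi : ‖bas i‖ = 1 := bas.orthonormal.1 i
      calc ‖∑ j, ((w j : ℂ) • (∑' k, B' k ∘L (T ∘L Pj (v (m j))) ∘L A' k) (bas i)
              - (w j : ℂ) • Dt (bas i))‖
          ≤ ∑ j, w j * ((2 * √b + ‖Dt‖) * (1 / ((n : ℝ) + 1))) := by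
            refine norm_sum_le_of_le _ fun j _ => ?_
            rw [← smul_sub, norm_smul, Complex.norm_real, Real.norm_of_nonneg (hw0 j)]
            refine mul_le_mul_of_nonneg_left ?_ (hw0 j)
            have e1 := (hd (m j)).symm.err2 Nat.one_div_pos_of_nat.le adj' B' Ca Cb hA' hB'
              hCa hCb T (bas i)
            rw [← hb, ← hDt, hbi, mul_one] at e1
            have e2 : ‖Dt (Pj (v (m j)) (bas i)) - Dt (bas i)‖ ≤ ‖Dt‖ * (1 / ((m j : ℝ) + 1)) := by
              rw [← map_sub]
              exact le_opNorm_of_le _ (hi (m j) i hiI)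
            refine (norm_sub_le_norm_sub_add_norm_sub _ (Dt (Pj (v (m j)) (bas i))) _).trans ?_
            refine (add_le_add e1 e2).trans ?_
            rw [← add_mul]
            gcongr
            exact_mod_cast hm j
        _ = _ := by rw [← Finset.sum_mul, hw1, one_mul]
  choose g hg1 hg2 using step
  have hgl : ∀ i ∈ I, Tendsto (fun n => g n i) atTop (𝓝 (Dt (bas i))) := by
    intro i hiI
    rw [tendsto_iff_norm_sub_tendsto_zero]
    refine squeeze_zero (fun n => norm_nonneg _) (fun n => hg2 n i hiI) ?_
    simpa using hlim.const_mul (2 * √b + ‖Dt‖)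
  have t1 : Tendsto (fun n => ∑ i ∈ I, ‖g n i‖ ^ 2) atTop (𝓝 (∑ i ∈ I, ‖Dt (bas i)‖ ^ 2)) :=
    tendsto_finsetSum _ fun i hiI => (hgl i hiI).norm.pow 2
  have t2 : Tendsto (fun n : ℕ => (‖u0‖ + 1 / ((n : ℝ) + 1)) ^ 2) atTop (𝓝 (‖u0‖ ^ 2)) := by
    simpa using (hlim.const_add ‖u0‖).pow 2
  exact le_of_tendsto_of_tendsto' t1 t2 hg1

end Main2
section Meas

variable {X : Type*} [MeasurableSpace X] {μ : Measure X} {K : Type*}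

lemma mulOp_exists (μ : Measure X) (g : X → ℂ) (hg : Measurable g) (C : ℝ) (hC : ∀ x, ‖g x‖ ≤ C) :
    ∃ M : Lp ℂ 2 μ →L[ℂ] Lp ℂ 2 μ, ∀ f : Lp ℂ 2 μ, ⇑(M f) =ᵐ[μ] fun x => g x * f x := by
  have hm : ∀ f : Lp ℂ 2 μ, MemLp (fun x => g x * f x) 2 μ := fun f =>
    (Lp.memLp f).of_le_mul (c := C)
      (hg.aestronglyMeasurable.mul (Lp.aestronglyMeasurable f))
      (Eventually.of_forall fun x => by rw [norm_mul]; gcongr; exact hC x)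
  let M0 : Lp ℂ 2 μ →ₗ[ℂ] Lp ℂ 2 μ :=
    { toFun := fun f => (hm f).toLp _
      map_add' := fun f h => by
        apply Lp.ext
        filter_upwards [(hm (f + h)).coeFn_toLp, (hm f).coeFn_toLp, (hm h).coeFn_toLp,
          Lp.coeFn_add f h, Lp.coeFn_add ((hm f).toLp _) ((hm h).toLp _)] with x h1 h2 h3 h4 h5
        rw [h1, h5, Pi.add_apply, h2, h3, h4, Pi.add_apply, mul_add]
      map_smul' := fun c f => by
        apply Lp.ext
        filter_upwards [(hm (c • f)).coeFn_toLp, (hm f).coeFn_toLp,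
          Lp.coeFn_smul c f, Lp.coeFn_smul c ((hm f).toLp _)] with x h1 h2 h4 h5
        rw [RingHom.id_apply, h1, h5, Pi.smul_apply, h2, h4, Pi.smul_apply, smul_eq_mul,
          smul_eq_mul]
        ring }
  refine ⟨M0.mkContinuous C fun f => ?_, fun f => (hm f).coeFn_toLp⟩
  refine Lp.norm_le_mul_norm_of_ae_le_mul ?_
  filter_upwards [(hm f).coeFn_toLp] with x hx
  change ‖((hm f).toLp _ : Lp ℂ 2 μ) x‖ ≤ _
  rw [hx, norm_mul]
  gcongr
  exact hC x

lemma mulOp_norm (g : X → ℂ) (C : ℝ) (hC : ∀ x, ‖g x‖ ≤ C)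
    (M : Lp ℂ 2 μ →L[ℂ] Lp ℂ 2 μ) (hM : ∀ f : Lp ℂ 2 μ, ⇑(M f) =ᵐ[μ] fun x => g x * f x) :
    ‖M‖ ≤ |C| := by
  refine opNorm_le_bound _ (abs_nonneg _) fun f => ?_
  refine Lp.norm_le_mul_norm_of_ae_le_mul ?_
  filter_upwards [hM f] with x hx
  rw [hx, norm_mul]
  gcongr
  exact (hC x).trans (le_abs_self C)

lemma mulOp_adj (g : X → ℂ) (M M' : Lp ℂ 2 μ →L[ℂ] Lp ℂ 2 μ)
    (hM : ∀ f : Lp ℂ 2 μ, ⇑(M f) =ᵐ[μ] fun x => g x * f x)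
    (hM' : ∀ f : Lp ℂ 2 μ, ⇑(M' f) =ᵐ[μ] fun x => (starRingEnd ℂ) (g x) * f x)
    (x y : Lp ℂ 2 μ) : inner ℂ (M' x) y = inner ℂ x (M y) := by
  rw [L2.inner_def, L2.inner_def]
  refine integral_congr_ae ?_
  filter_upwards [hM y, hM' x] with t h1 h2
  rw [h1, h2]
  simp only [RCLike.inner_apply, map_mul, Complex.conj_conj]
  ring

lemma mulOp_normal (g h : X → ℂ) (M M' N N' : Lp ℂ 2 μ →L[ℂ] Lp ℂ 2 μ)
    (hM : ∀ f : Lp ℂ 2 μ, ⇑(M f) =ᵐ[μ] fun x => g x * f x)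
    (hM' : ∀ f : Lp ℂ 2 μ, ⇑(M' f) =ᵐ[μ] fun x => (starRingEnd ℂ) (g x) * f x)
    (hN : ∀ f : Lp ℂ 2 μ, ⇑(N f) =ᵐ[μ] fun x => h x * f x)
    (hN' : ∀ f : Lp ℂ 2 μ, ⇑(N' f) =ᵐ[μ] fun x => (starRingEnd ℂ) (h x) * f x)
    (x y : Lp ℂ 2 μ) : inner ℂ (M' x) (N' y) = inner ℂ (N x) (M y) := by
  rw [L2.inner_def, L2.inner_def]
  refine integral_congr_ae ?_
  filter_upwards [hM y, hM' x, hN x, hN' y] with t h1 h2 h3 h4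
  rw [h1, h2, h3, h4]
  simp only [RCLike.inner_apply, map_mul, Complex.conj_conj]
  ring

lemma L2_enorm_sq (f : Lp ℂ 2 μ) : ‖f‖ₑ ^ 2 = ∫⁻ x, ‖f x‖ₑ ^ 2 ∂μ := by
  rw [Lp.enorm_def, eLpNorm_eq_lintegral_rpow_enorm_toReal (by norm_num) (by norm_num)]
  simp only [ENNReal.toReal_ofNat, ENNReal.rpow_ofNat, one_div]
  rw [← ENNReal.rpow_natCast, ← ENNReal.rpow_mul]
  norm_num

lemma tsum_mulOp_le [Countable K] (α : K → X → ℂ) (M : K → Lp ℂ 2 μ →L[ℂ] Lp ℂ 2 μ)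
    (hα : ∀ k, Measurable (α k))
    (hM : ∀ k, ∀ f : Lp ℂ 2 μ, ⇑(M k f) =ᵐ[μ] fun x => α k x * f x) (g : Lp ℂ 2 μ) (c : ℝ≥0∞)
    (h : ∀ᵐ x ∂μ, (∑' k, ‖α k x‖ₑ ^ 2) * ‖g x‖ₑ ^ 2 ≤ c * ‖g x‖ₑ ^ 2) :
    ∑' k, ‖M k g‖ₑ ^ 2 ≤ c * ‖g‖ₑ ^ 2 := by
  have hgm : AEMeasurable (fun x => ‖g x‖ₑ ^ 2) μ :=
    ((Lp.aestronglyMeasurable g).enorm).pow_const 2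
  have h1 : ∀ k, ‖M k g‖ₑ ^ 2 = ∫⁻ x, ‖α k x‖ₑ ^ 2 * ‖g x‖ₑ ^ 2 ∂μ := by
    intro k
    rw [L2_enorm_sq]
    refine lintegral_congr_ae ?_
    filter_upwards [hM k g] with x hx
    rw [hx, enorm_mul, mul_pow]
  simp only [h1]
  have hk : ∀ k, AEMeasurable (fun x => ‖α k x‖ₑ ^ 2 * ‖g x‖ₑ ^ 2) μ := fun k =>
    ((hα k).enorm.pow_const 2).aemeasurable.mul hgm
  rw [← lintegral_tsum hk]
  simp only [ENNReal.tsum_mul_right]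
  refine (lintegral_mono_ae h).trans_eq ?_
  rw [lintegral_const_mul'' _ hgm, L2_enorm_sq]

lemma cover {E : Type*} [NormedAddCommGroup E] [MeasurableSpace E] [BorelSpace E] (D : Set E)
    (hD : Measure.hausdorffMeasure 2 D < ⊤) (ε : ℝ) (hε : 0 < ε) :
    ∃ (lam : ℕ → E) (d : ℕ → ℝ≥0∞), (∀ j, d j ≤ ENNReal.ofReal ε) ∧
      ∑' j, d j ^ 2 ≤ Measure.hausdorffMeasure 2 D + 1 ∧ ∀ x ∈ D, ∃ j, edist x (lam j) ≤ d j := by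
  classical
  have h1 : (⨅ (t : ℕ → Set E) (_ : D ⊆ ⋃ n, t n) (_ : ∀ n, Metric.ediam (t n) ≤ ENNReal.ofReal ε),
          ∑' n, ⨆ _ : (t n).Nonempty, Metric.ediam (t n) ^ (2 : ℝ)) <
        Measure.hausdorffMeasure 2 D + 1 := by
    refine lt_of_le_of_lt ?_ (ENNReal.lt_add_right hD.ne one_ne_zero)
    rw [Measure.hausdorffMeasure_apply]
    exact le_iSup₂ (f := fun (r : ℝ≥0∞) (_ : 0 < r) =>
      ⨅ (t : ℕ → Set E) (_ : D ⊆ ⋃ n, t n) (_ : ∀ n, Metric.ediam (t n) ≤ r),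
          ∑' n, ⨆ _ : (t n).Nonempty, Metric.ediam (t n) ^ (2 : ℝ)) (ENNReal.ofReal ε)
      (ENNReal.ofReal_pos.2 hε)
  simp only [iInf_lt_iff] at h1
  obtain ⟨t, hDt, htd, hts⟩ := h1
  refine ⟨fun j => if h : (t j).Nonempty then h.some else 0,
    fun j => Metric.ediam (t j), htd, ?_, ?_⟩
  · refine le_trans (ENNReal.tsum_le_tsum fun j => ?_) hts.le
    by_cases h : (t j).Nonempty
    · simp [h]
    · have h0 : t j = ∅ := Set.not_nonempty_iff_eq_empty.1 h
      simp [h0]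
  · intro x hx
    obtain ⟨j, hj⟩ := Set.mem_iUnion.1 (hDt hx)
    refine ⟨j, ?_⟩
    have h : (t j).Nonempty := ⟨x, hj⟩
    simp only [h, dite_true]
    exact Metric.edist_le_ediam_of_mem hj h.some_mem

end Meas
section Build

variable {X : Type*} [MeasurableSpace X] {μ : Measure X} {K : Type*}

lemma proj_tendsto (Z : ℕ → Set X) (hZd : Pairwise (Function.onFun Disjoint Z))
    (hZc : ∀ᵐ x ∂μ, ∃ j, x ∈ Z j) (Q : ℕ → Lp ℂ 2 μ →L[ℂ] Lp ℂ 2 μ)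
    (hQ : ∀ j, ∀ f : Lp ℂ 2 μ, ⇑(Q j f) =ᵐ[μ] fun x => (Z j).indicator 1 x * f x)
    (f : Lp ℂ 2 μ) :
    Tendsto (fun J : ℕ => ‖∑ j ∈ Finset.range J, Q j f - f‖) atTop (𝓝 0) := by
  classical
  have hpt : ∀ᵐ x ∂μ, ∀ J : ℕ, (∑ j ∈ Finset.range J, Q j f - f : Lp ℂ 2 μ) x =
      (∑ j ∈ Finset.range J, (Z j).indicator (1 : X → ℂ) x) * f x - f x := by
    rw [ae_all_iff]
    intro J
    filter_upwards [Lp.coeFn_sub (∑ j ∈ Finset.range J, Q j f) f,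
      Lp.coeFn_finsetSum (Finset.range J) (fun j => Q j f), ae_all_iff.2 (fun j => hQ j f)]
      with x h1 h2 h3
    rw [h1, Pi.sub_apply, h2, Finset.sum_apply, Finset.sum_mul]
    congr 1
    exact Finset.sum_congr rfl fun j _ => h3 j
  have hsum : ∀ x j J, x ∈ Z j → (∑ i ∈ Finset.range J, (Z i).indicator (1 : X → ℂ) x) =
      if j < J then 1 else 0 := by
    intro x j J hx
    have h0 : ∀ i, (Z i).indicator (1 : X → ℂ) x = if i = j then 1 else 0 := by
      intro i
      by_cases hij : i = j
      · subst hij; simp [hx]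
      · rw [if_neg hij, Set.indicator_of_notMem]
        exact fun hi => Set.disjoint_left.1 (hZd hij) hi hx
    simp only [h0, Finset.sum_ite_eq', Finset.mem_range]
  have key : Tendsto (fun J : ℕ => ∫⁻ x, ‖(∑ j ∈ Finset.range J, Q j f - f : Lp ℂ 2 μ) x‖ₑ ^ 2 ∂μ)
      atTop (𝓝 (∫⁻ _, 0 ∂μ)) := by
    refine tendsto_lintegral_of_dominated_convergence' (fun x => ‖f x‖ₑ ^ 2)
      (fun J => ((Lp.aestronglyMeasurable _).enorm).pow_const 2) (fun J => ?_) ?_ ?_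
    · filter_upwards [hpt, hZc] with x h1 ⟨j, hj⟩
      rw [h1, hsum x j J hj]
      split_ifs <;> simp
    · rw [← L2_enorm_sq]
      exact ENNReal.pow_ne_top enorm_ne_top
    · filter_upwards [hpt, hZc] with x h1 ⟨j, hj⟩
      refine tendsto_const_nhds.congr' ?_
      filter_upwards [eventually_gt_atTop j] with J hJ
      rw [h1, hsum x j J hj, if_pos hJ]
      simp
  simp only [← L2_enorm_sq, lintegral_zero] at key
  have k2 := (ENNReal.tendsto_toReal (by simp)).comp key
  simp only [Function.comp_def, ENNReal.toReal_pow, toReal_enorm, ENNReal.toReal_zero] at k2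
  have k3 := k2.sqrt
  simpa using k3

lemma approx_of_cover [Countable K] [MeasurableSpace (lp (fun _ : K => ℂ) 2)]
    [BorelSpace (lp (fun _ : K => ℂ) 2)]
    (a : K → X → ℂ) (ha : ∀ k, Measurable (a k))
    (Ma Mac : K → (Lp ℂ 2 μ →L[ℂ] Lp ℂ 2 μ))
    (hMa : ∀ (k : K) (f : Lp ℂ 2 μ), ⇑(Ma k f) =ᵐ[μ] fun x => a k x * f x)
    (hMac : ∀ (k : K) (f : Lp ℂ 2 μ),
      ⇑(Mac k f) =ᵐ[μ] fun x => (starRingEnd ℂ) (a k x) * f x)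
    (D : Set (lp (fun _ : K => ℂ) 2))
    (hD : Measure.hausdorffMeasure 2 D < ⊤)
    (haD : ∀ᵐ x ∂μ, ∃ lam : lp (fun _ : K => ℂ) 2, lam ∈ D ∧ ∀ k, lam k = a k x)
    {ι : Type*} (bas : HilbertBasis ι ℂ (Lp ℂ 2 μ)) : Approx bas Ma Mac := by
  classical
  intro I
  refine ⟨(I.card : ℝ≥0∞) * (Measure.hausdorffMeasure 2 D + 1),
    ENNReal.mul_ne_top (ENNReal.natCast_ne_top _) (ENNReal.add_ne_top.2 ⟨hD.ne, by simp⟩), ?_⟩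
  intro ε hε
  obtain ⟨lam, d, hd, hds, hcov⟩ := cover D hD ε hε
  -- the pieces
  set W : ℕ → Set X := fun j => {x | ∑' k, ‖a k x - lam j k‖ₑ ^ 2 ≤ d j ^ 2} with hW
  have hWm : ∀ j, MeasurableSet (W j) := fun j =>
    measurableSet_le (Measurable.tsum fun k =>
      (((ha k).sub_const _).enorm).pow_const 2) measurable_const
  set Z : ℕ → Set X := disjointed W with hZ
  have hZm : ∀ j, MeasurableSet (Z j) := fun j => MeasurableSet.disjointed hWm j
  have hZd : Pairwise (Function.onFun Disjoint Z) := disjoint_disjointed W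
  have hZW : ∀ j, Z j ⊆ W j := fun j => disjointed_subset W j
  have hZc : ∀ᵐ x ∂μ, ∃ j, x ∈ Z j := by
    filter_upwards [haD] with x ⟨l, hl, hlx⟩
    obtain ⟨j, hj⟩ := hcov l hl
    have : x ∈ ⋃ j, Z j := by
      rw [hZ, iUnion_disjointed]
      refine Set.mem_iUnion.2 ⟨j, ?_⟩
      change ∑' k, ‖a k x - lam j k‖ₑ ^ 2 ≤ d j ^ 2
      rw [edist_eq_enorm_sub] at hj
      have h2 := lp_enorm_sq (l - lam j)
      have h3 : ∀ k, (l - lam j) k = a k x - lam j k := fun k => by rw [← hlx k]; rfl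
      simp only [h3] at h2
      rw [← h2]
      gcongr
    exact Set.mem_iUnion.1 this
  have hQ0 : ∀ j, ∃ M : Lp ℂ 2 μ →L[ℂ] Lp ℂ 2 μ,
      ∀ f : Lp ℂ 2 μ, ⇑(M f) =ᵐ[μ] fun x => (Z j).indicator (1 : X → ℂ) x * f x := fun j =>
    mulOp_exists μ _ (measurable_one.indicator (hZm j)) 1 fun x => by
      by_cases hx : x ∈ Z j <;> simp [hx]
  choose Q hQ using hQ0
  have hev : ∀ᶠ J : ℕ in atTop, ∀ i ∈ I, ‖∑ j ∈ Finset.range J, Q j (bas i) - bas i‖ < ε / 2 :=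
    (Finset.eventually_all I).2 fun i _ =>
      (proj_tendsto Z hZd hZc Q hQ (bas i)).eventually_lt_const (by positivity)
  obtain ⟨J, hJ⟩ := hev.exists
  -- the spaces
  let V : ℕ → Submodule ℂ (Lp ℂ 2 μ) := fun j =>
    Submodule.span ℂ ((I.image fun i => Q j (bas i) : Finset (Lp ℂ 2 μ)) : Set (Lp ℂ 2 μ))
  have hVfin : ∀ j, FiniteDimensional ℂ (V j) := fun j => FiniteDimensional.span_finset ℂ _
  have hVr : ∀ j, Module.finrank ℂ (V j) ≤ I.card := fun j =>
    (finrank_span_finset_le_card (R := ℂ) (I.image fun i => Q j (bas i))).trans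
      Finset.card_image_le
  have hVQ : ∀ j, ∀ w ∈ V j, Q j w = w := by
    intro j w hw
    have hle : V j ≤ LinearMap.eqLocus (Q j : Lp ℂ 2 μ →ₗ[ℂ] Lp ℂ 2 μ) LinearMap.id := by
      refine Submodule.span_le.2 ?_
      intro w hw
      obtain ⟨i, _, rfl⟩ := Finset.mem_image.1 (Finset.mem_coe.1 hw)
      change Q j (Q j (bas i)) = Q j (bas i)
      apply Lp.ext
      filter_upwards [hQ j (Q j (bas i)), hQ j (bas i)] with x h1 h2
      rw [h1, h2]
      by_cases hx : x ∈ Z j <;> simp [hx]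
    exact hle hw
  have hVz : ∀ j, ∀ w ∈ V j, ∀ᵐ x ∂μ, x ∉ Z j → w x = 0 := by
    intro j w hw
    filter_upwards [hQ j w] with x h1 hx
    rw [hVQ j w hw] at h1
    rw [h1]; simp [hx]
  let o := fun j : ℕ => stdOrthonormalBasis ℂ (V j)
  let L : Type := Σ j : Fin J, Fin (Module.finrank ℂ (V j))
  let v : L → Lp ℂ 2 μ := fun l => ((o l.1 l.2 : V l.1) : Lp ℂ 2 μ)
  have hvV : ∀ l : L, v l ∈ V l.1 := fun l => (o l.1 l.2).2
  have hon : Orthonormal ℂ v := by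
    refine ⟨fun l => (o l.1).orthonormal.1 l.2, ?_⟩
    rintro ⟨j, r⟩ ⟨j', r'⟩ hne
    by_cases hjj : j = j'
    · subst hjj
      have hr : r ≠ r' := fun h => hne (by rw [h])
      exact (o j).orthonormal.2 hr
    · rw [L2.inner_def, ← integral_zero X ℂ (μ := μ)]
      refine integral_congr_ae ?_
      filter_upwards [hVz _ _ (hvV ⟨j, r⟩), hVz _ _ (hvV ⟨j', r'⟩)] with x h1 h2
      by_cases hx : x ∈ Z j
      · rw [h2 fun h => Set.disjoint_left.1 (hZd (fun h => hjj (Fin.ext h))) hx h]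
        simp
      · rw [h1 hx]; simp
  have hPv : ∀ l, Pj v (v l) = v l := by
    intro l
    rw [Pj_apply]
    rw [Finset.sum_eq_single l]
    · rw [inner_self_eq_norm_sq_to_K, hon.1 l]; simp
    · intro m _ hm
      rw [hon.2 hm, zero_smul]
    · intro h; exact absurd (Finset.mem_univ l) h
  have hPV : ∀ j : Fin J, ∀ w ∈ V j, Pj v w = w := by
    intro j w hw
    have h1 := (o j).sum_repr ⟨w, hw⟩
    have h2 := congrArg (Subtype.val) h1
    simp only [Submodule.coe_sum, Submodule.coe_smul] at h2
    rw [← h2, map_sum]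
    refine Finset.sum_congr rfl fun r _ => ?_
    rw [map_smul]
    congr 1
    exact hPv ⟨j, r⟩
  -- the small parts
  let α : K → X → ℂ := fun k x =>
    ∑ j ∈ Finset.range J, (Z j).indicator (fun x => a k x - lam j k) x
  have hαm : ∀ k, Measurable (α k) := fun k =>
    Finset.measurable_sum _ fun j _ => ((ha k).sub_const _).indicator (hZm j)
  have hα1 : ∀ k x j, j < J → x ∈ Z j → α k x = a k x - lam j k := by
    intro k x j hj hx
    change ∑ j ∈ Finset.range J, _ = _
    rw [Finset.sum_eq_single j]
    · simp [hx]
    · intro i _ hij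
      rw [Set.indicator_of_notMem]
      exact fun hi => Set.disjoint_left.1 (hZd hij) hi hx
    · intro h; exact absurd (Finset.mem_range.2 hj) h
  have hα2 : ∀ x j, j < J → x ∈ Z j → ∑' k, ‖α k x‖ₑ ^ 2 ≤ d j ^ 2 := by
    intro x j hj hx
    simp only [fun k => hα1 k x j hj hx]
    exact hZW j hx
  have hα3 : ∀ x, ∑' k, ‖α k x‖ₑ ^ 2 ≤ ENNReal.ofReal (ε ^ 2) := by
    intro x
    rw [ENNReal.ofReal_pow hε.le]
    by_cases h : ∃ j, j < J ∧ x ∈ Z j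
    · obtain ⟨j, hj, hx⟩ := h
      refine (hα2 x j hj hx).trans ?_
      gcongr
      exact hd j
    · have h0 : ∀ k, α k x = 0 := by
        intro k
        refine Finset.sum_eq_zero fun j hj => ?_
        rw [Set.indicator_of_notMem]
        exact fun hx => h ⟨j, Finset.mem_range.1 hj, hx⟩
      simp [h0]
  have hα4 : ∀ k x, ‖α k x‖ ≤ ε := by
    intro k x
    have h1 : ‖α k x‖ₑ ^ 2 ≤ ENNReal.ofReal (ε ^ 2) := (ENNReal.le_tsum k).trans (hα3 x)
    rw [← ofReal_norm, ← ENNReal.ofReal_pow (norm_nonneg _),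
      ENNReal.ofReal_le_ofReal_iff (by positivity)] at h1
    exact (sq_le_sq₀ (norm_nonneg _) hε.le).1 h1
  choose δ hδ using fun k => mulOp_exists μ (α k) (hαm k) ε (hα4 k)
  have hαcm : ∀ k, Measurable fun x => (starRingEnd ℂ) (α k x) := fun k =>
    Complex.continuous_conj.measurable.comp (hαm k)
  choose δ' hδ' using fun k => mulOp_exists μ (fun x => (starRingEnd ℂ) (α k x)) (hαcm k) ε
    (fun x => by rw [RCLike.norm_conj]; exact hα4 k x)
  have hec : ∀ z : ℂ, ‖(starRingEnd ℂ) z‖ₑ = ‖z‖ₑ := fun z => by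
    rw [← ofReal_norm, RCLike.norm_conj, ofReal_norm]
  have hloc : ∀ l : L, ∀ᵐ x ∂μ, (∑' k, ‖α k x‖ₑ ^ 2) * ‖v l x‖ₑ ^ 2 ≤
      d l.1 ^ 2 * ‖v l x‖ₑ ^ 2 := by
    intro l
    filter_upwards [hVz _ _ (hvV l)] with x h1
    by_cases hx : x ∈ Z l.1
    · gcongr
      exact hα2 x l.1 l.1.2 hx
    · rw [h1 hx]; simp
  have hsumd : ∑ l : L, d l.1 ^ 2 ≤ (I.card : ℝ≥0∞) * (Measure.hausdorffMeasure 2 D + 1) := by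
    rw [Fintype.sum_sigma]
    simp only [Finset.sum_const, Finset.card_univ, Fintype.card_fin, nsmul_eq_mul]
    calc ∑ j : Fin J, (Module.finrank ℂ (V j) : ℝ≥0∞) * d j ^ 2
        ≤ ∑ j : Fin J, (I.card : ℝ≥0∞) * d j ^ 2 := by
          refine Finset.sum_le_sum fun j _ => ?_
          gcongr
          exact hVr j
      _ = (I.card : ℝ≥0∞) * ∑ j ∈ Finset.range J, d j ^ 2 := by
          rw [← Finset.mul_sum, Finset.sum_range]
      _ ≤ _ := by
          gcongr
          exact (ENNReal.sum_le_tsum _).trans hds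
  have hv1 : ∀ l, ‖v l‖ₑ = 1 := fun l => by
    rw [← ofReal_norm, hon.1 l, ENNReal.ofReal_one]
  refine ⟨L, inferInstance, v, δ, δ', fun l k => lam l.1 k, ⟨hon, ?_, ?_, ?_, ?_, ?_, ?_, ?_⟩, ?_⟩
  · intro k l
    apply Lp.ext
    filter_upwards [hMa k (v l), hδ k (v l), hVz _ _ (hvV l),
      Lp.coeFn_add (δ k (v l)) (lam l.1 k • v l), Lp.coeFn_smul (lam l.1 k) (v l)]
      with x h1 h2 h3 h4 h5
    rw [h1, h4, Pi.add_apply, h2, h5, Pi.smul_apply, smul_eq_mul]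
    by_cases hx : x ∈ Z l.1
    · rw [hα1 k x l.1 l.1.2 hx]; ring
    · rw [h3 hx]; simp
  · intro k l
    apply Lp.ext
    filter_upwards [hMac k (v l), hδ' k (v l), hVz _ _ (hvV l),
      Lp.coeFn_add (δ' k (v l)) ((starRingEnd ℂ) (lam l.1 k) • v l),
      Lp.coeFn_smul ((starRingEnd ℂ) (lam l.1 k)) (v l)]
      with x h1 h2 h3 h4 h5
    rw [h1, h4, Pi.add_apply, h2, h5, Pi.smul_apply, smul_eq_mul]
    by_cases hx : x ∈ Z l.1
    · rw [hα1 k x l.1 l.1.2 hx, map_sub]; ring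
    · rw [h3 hx]; simp
  · intro k x y
    exact mulOp_adj (α k) _ _ (hδ k) (hδ' k) x y
  · intro g
    refine tsum_mulOp_le α δ hαm hδ g _ (Eventually.of_forall fun x => ?_)
    gcongr
    exact hα3 x
  · intro g
    refine tsum_mulOp_le (fun k x => (starRingEnd ℂ) (α k x)) δ' hαcm hδ' g _
      (Eventually.of_forall fun x => ?_)
    simp only [hec]
    gcongr
    exact hα3 x
  · refine le_trans (Finset.sum_le_sum fun l _ => ?_) hsumd
    have h := tsum_mulOp_le α δ hαm hδ (v l) _ (hloc l)
    rwa [hv1, one_pow, mul_one] at h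
  · refine le_trans (Finset.sum_le_sum fun l _ => ?_) hsumd
    have h := tsum_mulOp_le (fun k x => (starRingEnd ℂ) (α k x)) δ' hαcm hδ' (v l) (d l.1 ^ 2)
      (by simp only [hec]; exact hloc l)
    rwa [hv1, one_pow, mul_one] at h
  · intro i hi
    set s := ∑ j ∈ Finset.range J, Q j (bas i) with hs
    have h1 : Pj v s = s := by
      rw [hs, map_sum]
      refine Finset.sum_congr rfl fun j hj => ?_
      exact hPV ⟨j, Finset.mem_range.1 hj⟩ _
        (Submodule.subset_span (Finset.mem_coe.2 (Finset.mem_image_of_mem _ hi)))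
    have h2 : Pj v (bas i) - bas i = (s - bas i) - Pj v (s - bas i) := by
      rw [map_sub, h1]; abel
    have h3 := hJ i hi
    have h4 := Pj_norm v hon (s - bas i)
    rw [h2]
    linarith [norm_sub_le (s - bas i) (Pj v (s - bas i))]

end Build

end FW

/-- Extension of the Fuglede–Weiss theorem: for the multiplication operator
`Δ(T) = ∑ k M_{b k} T M_{a k}` with commuting normal coefficients whose left coefficient
family has essential Hausdorff dimension at most 2, and its formal adjoint
`Δ̃(T) = ∑ k M_{conj (b k)} T M_{conj (a k)}`, one has `‖Δ(T)‖₂ = ‖Δ̃(T)‖₂` for every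
bounded operator `T` (the common value possibly being `∞`). -/
theorem hsNormSq_eq_hsNormSq_tilde
    {X Y : Type*} [MeasurableSpace X] [MeasurableSpace Y]
    [StandardBorelSpace X] [StandardBorelSpace Y]
    (μ : Measure X) (ν : Measure Y) [SigmaFinite μ] [SigmaFinite ν]
    {K : Type*} [Countable K]
    [MeasurableSpace (lp (fun _ : K => ℂ) 2)] [BorelSpace (lp (fun _ : K => ℂ) 2)]
    (a : K → X → ℂ) (b : K → Y → ℂ)
    (ha : ∀ k, Measurable (a k)) (hb : ∀ k, Measurable (b k))
    (Ca Cb : K → ℝ)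
    (haC : ∀ k x, ‖a k x‖ ≤ Ca k) (hbC : ∀ k y, ‖b k y‖ ≤ Cb k)
    (hCa : Summable fun k => Ca k ^ 2) (hCb : Summable fun k => Cb k ^ 2)
    (Ma : K → (Lp ℂ 2 μ →L[ℂ] Lp ℂ 2 μ)) (Mb : K → (Lp ℂ 2 ν →L[ℂ] Lp ℂ 2 ν))
    (Mac : K → (Lp ℂ 2 μ →L[ℂ] Lp ℂ 2 μ)) (Mbc : K → (Lp ℂ 2 ν →L[ℂ] Lp ℂ 2 ν))
    (hMa : ∀ (k : K) (f : Lp ℂ 2 μ), ⇑(Ma k f) =ᵐ[μ] fun x => a k x * f x)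
    (hMb : ∀ (k : K) (g : Lp ℂ 2 ν), ⇑(Mb k g) =ᵐ[ν] fun y => b k y * g y)
    (hMac : ∀ (k : K) (f : Lp ℂ 2 μ),
      ⇑(Mac k f) =ᵐ[μ] fun x => (starRingEnd ℂ) (a k x) * f x)
    (hMbc : ∀ (k : K) (g : Lp ℂ 2 ν),
      ⇑(Mbc k g) =ᵐ[ν] fun y => (starRingEnd ℂ) (b k y) * g y)
    (D : Set (lp (fun _ : K => ℂ) 2))
    (hD : Measure.hausdorffMeasure 2 D < ⊤)
    (haD : ∀ᵐ x ∂μ, ∃ lam : lp (fun _ : K => ℂ) 2, lam ∈ D ∧ ∀ k, lam k = a k x)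
    {ι : Type*} (bas : HilbertBasis ι ℂ (Lp ℂ 2 μ))
    (T : Lp ℂ 2 μ →L[ℂ] Lp ℂ 2 ν) :
    hsNormSq bas (∑' k, Mb k ∘L T ∘L Ma k) = hsNormSq bas (∑' k, Mbc k ∘L T ∘L Mac k) := by
  have hca : ∀ k x, ‖(starRingEnd ℂ) (a k x)‖ ≤ Ca k := fun k x => by
    rw [RCLike.norm_conj]; exact haC k x
  have hcb : ∀ k y, ‖(starRingEnd ℂ) (b k y)‖ ≤ Cb k := fun k y => by
    rw [RCLike.norm_conj]; exact hbC k y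
  have nMa := fun k => FW.mulOp_norm (a k) (Ca k) (haC k) (Ma k) (hMa k)
  have nMac := fun k => FW.mulOp_norm _ (Ca k) (hca k) (Mac k) (hMac k)
  have nMb := fun k => FW.mulOp_norm (b k) (Cb k) (hbC k) (Mb k) (hMb k)
  have nMbc := fun k => FW.mulOp_norm _ (Cb k) (hcb k) (Mbc k) (hMbc k)
  have hCa' : Summable fun k => |Ca k| ^ 2 := by simpa only [sq_abs] using hCa
  have hCb' : Summable fun k => |Cb k| ^ 2 := by simpa only [sq_abs] using hCb
  have adj : ∀ k x y, inner ℂ (Mac k x) y = inner ℂ x (Ma k y) := fun k x y =>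
    FW.mulOp_adj (a k) _ _ (hMa k) (hMac k) x y
  have nA : ∀ k l x y, inner ℂ (Mac k x) (Mac l y) = inner ℂ (Ma l x) (Ma k y) :=
    fun k l x y => FW.mulOp_normal (a k) (a l) _ _ _ _ (hMa k) (hMac k) (hMa l) (hMac l) x y
  have nB : ∀ k l x y, inner ℂ (Mbc k x) (Mbc l y) = inner ℂ (Mb l x) (Mb k y) :=
    fun k l x y => FW.mulOp_normal (b k) (b l) _ _ _ _ (hMb k) (hMbc k) (hMb l) (hMbc l) x y
  have happ := FW.approx_of_cover a ha Ma Mac hMa hMac D hD haD bas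
  apply le_antisymm
  · exact FW.abs_le bas Mac Ma Mbc Mb (fun k => |Ca k|) (fun k => |Cb k|) nMac nMa nMbc nMb
      hCa' hCb' (fun k x y => by rw [← inner_conj_symm, ← adj, inner_conj_symm])
      (fun k l x y => (nA l k x y).symm) (fun k l x y => (nB l k x y).symm) happ.symm T
  · exact FW.abs_le bas Ma Mac Mb Mbc (fun k => |Ca k|) (fun k => |Cb k|) nMa nMac nMb nMbc
      hCa' hCb' adj nA nB happ T
end

section
/- Let H₁ and H₂ be separable complex Hilbert spaces, k ≥ 2, let A₁, …, A_k be pairwise commuting bounded normal operators on H₁, and let B₁, …, B_k be pairwise commuting bounded normal operators on H₂. Define Δ : B(H₁, H₂) → B(H₁, H₂) by Δ(T) = Σ_{i=1}^k B_i T A_i. Then ker Δ^{k−1} = ker Δ^k; that is, the ascent of Δ is at most k − 1. -/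
open ContinuousLinearMap


section part1
variable {H : Type*} [NormedAddCommGroup H] [InnerProductSpace ℂ H] [CompleteSpace H]

lemma aux_half (p : H →L[ℂ] H) (hp : 0 ≤ p) (r : ℝ) (hr : ‖p‖ ≤ r) :
    ‖p - ((r/2 : ℝ) : ℂ) • (1 : H →L[ℂ] H)‖ ≤ r / 2 := by
  have hr0 : 0 ≤ r := (norm_nonneg _).trans hr
  have h1 : p ≤ algebraMap ℝ _ r := (CStarAlgebra.norm_le_iff_le_algebraMap p hr0 hp).1 hr
  have hsa : IsSelfAdjoint p := .of_nonneg hp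
  have e : p - ((r/2 : ℝ) : ℂ) • (1 : H →L[ℂ] H) = cfc (fun t : ℝ => t - r/2) p := by
    rw [cfc_sub .., cfc_id' .., cfc_const ..]
    congr 1
  rw [e]
  refine norm_cfc_le (by linarith) fun x hx => ?_
  have h2 : 0 ≤ x := spectrum_nonneg_of_nonneg hp hx
  have h3 : x ≤ r := by
    rw [le_algebraMap_iff_spectrum_le] at h1
    exact h1 x hx
  rw [Real.norm_eq_abs, abs_le]; constructor <;> linarith

lemma exists_split (h : H →L[ℂ] H) (hh : IsSelfAdjoint h) :
    ∃ F : H →L[ℂ] H, star F = F ∧ F * F = F ∧ (∀ W, Commute W h → Commute W F) ∧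
      h * F = h⁺ ∧ h * (1 - F) = - h⁻ := by
  let N : Submodule ℂ H := LinearMap.ker (h⁺ : H →L[ℂ] H).toLinearMap
  have hNc : IsClosed (N : Set H) := (h⁺ : H →L[ℂ] H).isClosed_ker
  have : CompleteSpace N := hNc.completeSpace_coe
  let Q : H →L[ℂ] H := N.starProjection
  have hpos : star (h⁺) = h⁺ := (CFC.posPart_nonneg h).isSelfAdjoint
  have hneg : star (h⁻) = h⁻ := (CFC.negPart_nonneg h).isSelfAdjoint
  have hQs : star Q = Q := (isStarProjection_starProjection (U := N)).isSelfAdjoint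
  have hQi : Q * Q = Q := (isStarProjection_starProjection (U := N)).isIdempotentElem
  have hQm : ∀ v, h⁺ v = 0 → Q v = v := fun v hv => Submodule.starProjection_eq_self_iff.2 hv
  have hQr : ∀ v, h⁺ (Q v) = 0 := fun v => (Submodule.starProjection_apply_mem N v : _ ∈ N)
  have key : ∀ W : H →L[ℂ] H, Commute W h → Q * W * Q = W * Q := by
    intro W hW
    have hW' : Commute W h⁺ := by
      rw [CFC.posPart_def]
      have := hW.symm.cfcₙ_real (fun x => x⁺)
      exact this.symm
    ext v
    simp only [ContinuousLinearMap.mul_def, ContinuousLinearMap.comp_apply]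
    apply hQm
    have := congrArg (fun X : H →L[ℂ] H => X (Q v)) hW'.eq
    simp only [ContinuousLinearMap.mul_def, ContinuousLinearMap.comp_apply, hQr, map_zero] at this
    exact this.symm
  have hp0 : h⁺ * Q = 0 := by ext v; simpa using hQr v
  have hn0 : Q * h⁻ = h⁻ := by
    ext v
    simp only [ContinuousLinearMap.mul_def, ContinuousLinearMap.comp_apply]
    apply hQm
    have := congrArg (fun X : H →L[ℂ] H => X v) (CFC.posPart_mul_negPart h)
    exact this
  have hn1 : h⁻ * Q = h⁻ := by
    have := congrArg star hn0
    simpa [hQs, hneg] using this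
  have hd : h⁺ - h⁻ = h := CFC.posPart_sub_negPart h
  refine ⟨1 - Q, by simp [hQs], by simp [mul_sub, sub_mul, hQi], ?_, ?_, ?_⟩
  · intro W hW
    have h1 := key W hW
    have hW2 : Commute (star W) h := by
      have := hW.star_star
      rwa [hh.star_eq] at this
    have h2 := congrArg star (key _ hW2)
    simp only [star_mul, hQs, star_star] at h2
    refine (Commute.one_right W).sub_right ?_
    show W * Q = Q * W
    rw [← h2, ← mul_assoc, h1]

  · rw [← hd]
    simp only [hd]
    nth_rewrite 1 [← hd]
    rw [mul_sub, mul_one, sub_mul, hp0, hn1]; abel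
  · rw [sub_sub_cancel]
    nth_rewrite 1 [← hd]
    rw [sub_mul, hp0, hn1]; abel

structure PSys (S : Set (H →L[ℂ] H)) (r : ℕ) where
  J : ℕ → Type
  fin : ∀ n, Fintype (J n)
  E : ∀ n, J n → (H →L[ℂ] H)
  sa : ∀ n j, star (E n j) = E n j
  idem : ∀ n j, E n j * E n j = E n j
  orth : ∀ n j j', j ≠ j' → E n j * E n j' = 0
  sum : ∀ n, ∑ j, E n j = 1
  nest : ∀ n n', n ≤ n' → ∀ j j', E n' j' * E n j = 0 ∨ E n' j' * E n j = E n' j'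
  comm : ∀ n j W, (∀ h ∈ S, Commute W h) → Commute W (E n j)
  card : ∀ n, Fintype.card (J n) ≤ (2 ^ n) ^ r
  K : ℝ
  K0 : 0 ≤ K
  approx : ∀ n j, ∀ h ∈ S, ∃ c : ℂ, ‖(h - c • (1 : H →L[ℂ] H)) * E n j‖ ≤ K / 2 ^ n

attribute [instance] PSys.fin

def PSys.empty : PSys (∅ : Set (H →L[ℂ] H)) 0 where
  J _ := Unit
  fin _ := inferInstance
  E _ _ := 1
  sa := by simp
  idem := by simp
  orth := by simp
  sum := by simp
  nest := by simp
  comm := by simp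
  card := by simp
  K := 0
  K0 := le_rfl
  approx := by simp

def PSys.combine {S S' : Set (H →L[ℂ] H)} {r r' : ℕ} (P : PSys S r) (P' : PSys S' r')
    (hc : ∀ h ∈ S, ∀ h' ∈ S', Commute h h') : PSys (S ∪ S') (r + r') :=
  have cc : ∀ n j n' j', Commute (P.E n j) (P'.E n' j') := fun n j n' j' =>
    P'.comm n' j' _ fun h' hh' => (P.comm n j h' fun h hh => (hc h hh h' hh').symm).symm
  { J := fun n => P.J n × P'.J n
    fin := fun n => inferInstance
    E := fun n j => P.E n j.1 * P'.E n j.2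
    sa := fun n j => by rw [star_mul, P.sa, P'.sa, (cc _ _ _ _).eq]
    idem := fun n j => by
      rw [(cc n j.1 n j.2).symm.mul_mul_mul_comm, P.idem, P'.idem]
    orth := fun n j j' hj => by
      rw [(cc n j'.1 n j.2).symm.mul_mul_mul_comm]
      by_cases h : j.1 = j'.1
      · have : j.2 ≠ j'.2 := fun h2 => hj (Prod.ext h h2)
        rw [P'.orth _ _ _ this, mul_zero]
      · rw [P.orth _ _ _ h, zero_mul]
    sum := fun n => by
      rw [Fintype.sum_prod_type]
      simp only [← Finset.mul_sum, P'.sum, mul_one, P.sum]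
    nest := fun n n' hn j j' => by
      rw [(cc n j.1 n' j'.2).symm.mul_mul_mul_comm]
      rcases P.nest n n' hn j.1 j'.1 with h | h <;>
      rcases P'.nest n n' hn j.2 j'.2 with h' | h' <;> simp [h, h']
    comm := fun n j W hW => (P.comm n j.1 W fun h hh => hW h (Or.inl hh)).mul_right
      (P'.comm n j.2 W fun h hh => hW h (Or.inr hh))
    card := fun n => by
      rw [pow_add, Fintype.card_prod]
      exact Nat.mul_le_mul (P.card n) (P'.card n)
    K := P.K + P'.K
    K0 := add_nonneg P.K0 P'.K0
    approx := fun n j h hh => by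
      have hb : ∀ X : H →L[ℂ] H, star X = X → X * X = X → ‖X‖ ≤ 1 := fun X h1 h2 =>
        (IsStarProjection.mk h2 h1).norm_le
      rcases hh with hh | hh
      · obtain ⟨c, hc⟩ := P.approx n j.1 h hh
        refine ⟨c, ?_⟩
        rw [← mul_assoc]
        refine (norm_mul_le _ _).trans ?_
        have := hb _ (P'.sa n j.2) (P'.idem n j.2)
        calc _ ≤ P.K / 2 ^ n * 1 := by gcongr; exact div_nonneg P.K0 (by positivity)
          _ ≤ _ := by rw [mul_one]; gcongr; linarith [P'.K0]
      · obtain ⟨c, hc⟩ := P'.approx n j.2 h hh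
        refine ⟨c, ?_⟩
        rw [(cc _ _ _ _).eq, ← mul_assoc]
        refine (norm_mul_le _ _).trans ?_
        have := hb _ (P.sa n j.1) (P.idem n j.1)
        calc _ ≤ P'.K / 2 ^ n * 1 := by gcongr; exact div_nonneg P'.K0 (by positivity)
          _ ≤ _ := by rw [mul_one]; gcongr; linarith [P.K0] }


def JJ : ℕ → Type
  | 0 => Unit
  | n + 1 => Bool × JJ n

instance JJ.fintype : ∀ n, Fintype (JJ n)
  | 0 => inferInstanceAs (Fintype Unit)
  | n + 1 => by
    have := JJ.fintype n
    exact inferInstanceAs (Fintype (Bool × JJ n))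

lemma JJ.card : ∀ n, Fintype.card (JJ n) = 2 ^ n
  | 0 => rfl
  | n + 1 => by
    have h := JJ.card n
    have : Fintype.card (JJ (n+1)) = Fintype.card Bool * Fintype.card (JJ n) :=
      Fintype.card_prod _ _
    rw [this, h, Fintype.card_bool, pow_succ, mul_comm]

noncomputable def cellc (R : ℝ) : ∀ n, JJ n → ℝ
  | 0, _ => 0
  | n + 1, (b, j) => cellc R n j + (if b then R / 2 ^ (n + 1) else - (R / 2 ^ (n + 1)))

noncomputable def cellE (F : ℝ → (H →L[ℂ] H)) (R : ℝ) : ∀ n, JJ n → (H →L[ℂ] H)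
  | 0, _ => 1
  | n + 1, (b, j) => cellE F R n j * (if b then F (cellc R n j) else 1 - F (cellc R n j))

set_option maxHeartbeats 2000000 in
lemma exists_single (h : H →L[ℂ] H) (hh : IsSelfAdjoint h) :
    Nonempty (PSys ({h} : Set (H →L[ℂ] H)) 1) := by
  have hsh : ∀ c : ℝ, IsSelfAdjoint (h - (c : ℂ) • (1 : H →L[ℂ] H)) := by
    intro c
    refine hh.sub ?_
    rw [IsSelfAdjoint, star_smul, star_one]; simp
  choose F Fs Fi Fc Fp Fn using fun c : ℝ => exists_split _ (hsh c)
  have Fc' : ∀ c W, Commute W h → Commute W (F c) := fun c W hW =>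
    Fc c W (hW.sub_right ((Commute.one_right W).smul_right _))
  set R := ‖h‖ with hR
  let E := cellE F R
  have step : ∀ n b j, E (n+1) (b, j) =
    E n j * (if b then F (cellc R n j) else 1 - F (cellc R n j)) := fun n b j => rfl
  have comm : ∀ n j W, Commute W h → Commute W (E n j) := by
    intro n
    induction n with
    | zero => intro j W _; exact Commute.one_right W
    | succ n ih =>
      rintro ⟨b, j⟩ W hW
      rw [step]
      refine (ih j W hW).mul_right ?_
      cases b
      · simpa using (Commute.one_right W).sub_right (Fc' _ W hW)
      · simpa using Fc' _ W hW
  have cF : ∀ n j c, Commute (E n j) (F c) := fun n j c =>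
    Fc' c _ (comm n j h (Commute.refl h)).symm
  have cF' : ∀ n j (b : Bool) c, Commute (E n j) (if b then F c else 1 - F c) := by
    intro n j b c
    cases b
    · simpa using (Commute.one_right _).sub_right (cF n j c)
    · simpa using cF n j c
  have cE : ∀ n j n' j', Commute (E n j) (E n' j') := fun n j n' j' =>
    comm n' j' _ (comm n j h (Commute.refl h)).symm
  have sa : ∀ n j, star (E n j) = E n j := by
    intro n
    induction n with
    | zero => intro j; exact star_one _
    | succ n ih =>
      rintro ⟨b, j⟩
      rw [step, star_mul, ih, (cF' n j b _).eq]
      cases b <;> simp [Fs]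
  have idem : ∀ n j, E n j * E n j = E n j := by
    intro n
    induction n with
    | zero => intro j; exact one_mul _
    | succ n ih =>
      rintro ⟨b, j⟩
      rw [step, (cF' n j b _).symm.mul_mul_mul_comm, ih]
      cases b <;> simp [Fi, mul_sub, sub_mul]
  have orth : ∀ n j j', j ≠ j' → E n j * E n j' = 0 := by
    intro n
    induction n with
    | zero => intro j j' hj; exact (hj rfl).elim
    | succ n ih =>
      rintro ⟨b, j⟩ ⟨b', j'⟩ hj
      rw [step, step, (cF' n j' b _).symm.mul_mul_mul_comm]
      by_cases hjj : j = j'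
      · subst hjj
        have : b ≠ b' := fun hb => hj (by rw [hb])
        cases b <;> cases b' <;> simp_all [mul_sub, sub_mul]
      · rw [ih _ _ hjj, zero_mul]
  have hsum : ∀ n, ∑ j, E n j = 1 := by
    intro n
    induction n with
    | zero => exact Fintype.sum_unique (ι := Unit) (fun _ => (1 : H →L[ℂ] H))
    | succ n ih =>
      have : ∑ j, E (n+1) j = ∑ b : Bool, ∑ j : JJ n, E (n+1) (b, j) :=
        Fintype.sum_prod_type (fun p : Bool × JJ n => E (n+1) p)
      rw [this, Fintype.sum_bool, ← Finset.sum_add_distrib]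
      rw [← ih]
      refine Finset.sum_congr rfl fun j _ => ?_
      rw [step, step]
      simp [mul_sub]
  refine ⟨⟨JJ, JJ.fintype, E, sa, idem, orth, hsum, ?_, fun n j W hW => comm n j W (hW h rfl),
    fun n => by rw [JJ.card, pow_one], R, norm_nonneg _, ?_⟩⟩
  · intro n n' hn
    induction n', hn using Nat.le_induction with
    | base =>
      intro j j'
      by_cases hj : j' = j
      · right; rw [hj, idem]
      · left; exact orth _ _ _ hj
    | succ n' hn ih =>
      rintro j ⟨b, j'⟩
      have : E (n'+1) (b, j') * E n j = (if b then F (cellc R n' j') else 1 - F (cellc R n' j'))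
          * (E n' j' * E n j) := by
        rw [step, (cF' n' j' b _).eq, mul_assoc]
      rw [this]
      rcases ih j j' with h1 | h1
      · left; rw [h1, mul_zero]
      · right; rw [h1, step, (cF' n' j' b _).eq]
  · have key : ∀ n j, ‖(h - ((cellc R n j : ℝ) : ℂ) • (1 : H →L[ℂ] H)) * E n j‖ ≤ R / 2 ^ n := by
      intro n
      induction n with
      | zero =>
        intro j
        have e1 : cellc R 0 j = 0 := rfl
        have e2 : E 0 j = 1 := rfl
        rw [e1, e2]; simp [hR]
      | succ n ih =>
        rintro ⟨b, j⟩
        have ihj := ih j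
        set c := cellc R n j with hc
        set g := h - (c : ℂ) • (1 : H →L[ℂ] H) with hg
        have cg : Commute (E n j) g := by
          refine Commute.sub_right (comm n j h (Commute.refl h)).symm ?_
          exact (Commute.one_right _).smul_right _
        have hF1 : ‖F c‖ ≤ 1 := (IsStarProjection.mk (Fi c) (Fs c)).norm_le
        have hF2 : ‖1 - F c‖ ≤ 1 :=
          (IsStarProjection.mk (Fi c) (Fs c)).one_sub.norm_le
        have hEF : ‖E (n+1) (b, j)‖ ≤ 1 :=
          (IsStarProjection.mk (idem (n+1) (b,j)) (sa (n+1) (b,j))).norm_le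
        have hr0 : 0 ≤ R / 2 ^ n := div_nonneg (norm_nonneg _) (by positivity)
        have e2 : R / 2 ^ (n+1) = (R / 2 ^ n) / 2 := by rw [pow_succ]; field_simp
        cases b
        · -- negative half
          have e1 : cellc R (n+1) (false, j) = c - R / 2 ^ (n+1) := by
            show c + _ = _
            simp [sub_eq_add_neg]
          have eE : E (n+1) (false, j) = E n j * (1 - F c) := by rw [step]; simp [hc]
          have p0 : 0 ≤ E n j * g⁻ * E n j := by
            have := star_left_conjugate_nonneg (CFC.negPart_nonneg g) (E n j)
            rwa [sa] at this
          have pe : E n j * g⁻ * E n j = - (g * E (n+1) (false, j)) := by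
            have : g⁻ = - (g * (1 - F c)) := by rw [Fn c, neg_neg]
            rw [this, eE, mul_neg, neg_mul, ← mul_assoc, cg.eq]
            have c2 : Commute (E n j) (1 - F c) := (Commute.one_right _).sub_right (cF n j c)
            rw [mul_assoc, mul_assoc, c2.symm.eq, ← mul_assoc (E n j) (E n j), idem]
          have pn : ‖E n j * g⁻ * E n j‖ ≤ R / 2 ^ n := by
            rw [pe, norm_neg, eE, ← mul_assoc]
            refine (norm_mul_le _ _).trans ?_
            calc _ ≤ R / 2 ^ n * 1 := by gcongr
              _ = _ := mul_one _
          have := aux_half _ p0 _ pn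
          have e3 : (h - ((cellc R (n+1) (false, j) : ℝ) : ℂ) • (1 : H →L[ℂ] H)) * E (n+1) (false, j)
              = - ((E n j * g⁻ * E n j - ((R / 2 ^ n / 2 : ℝ) : ℂ) • (1 : H →L[ℂ] H)) *
                E (n+1) (false, j)) := by
            have hi := idem (n+1) (false, j)
            rw [pe, e1, e2, hg]
            generalize E (n+1) (false, j) = X at hi
            simp only [sub_mul, neg_mul, mul_assoc, hi, smul_mul_assoc, one_mul,
              Complex.ofReal_sub, sub_smul]
            abel
          rw [e3, norm_neg]
          refine (norm_mul_le _ _).trans ?_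
          rw [e2]
          calc _ ≤ R / 2 ^ n / 2 * 1 := by gcongr
            _ = _ := mul_one _
        · have e1 : cellc R (n+1) (true, j) = c + R / 2 ^ (n+1) := by
            show c + _ = _
            simp
          have eE : E (n+1) (true, j) = E n j * F c := by rw [step]; simp [hc]
          have p0 : 0 ≤ E n j * g⁺ * E n j := by
            have := star_left_conjugate_nonneg (CFC.posPart_nonneg g) (E n j)
            rwa [sa] at this
          have pe : E n j * g⁺ * E n j = g * E (n+1) (true, j) := by
            have : g⁺ = g * F c := by rw [Fp c]
            rw [this, eE, ← mul_assoc, cg.eq]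
            rw [mul_assoc, mul_assoc, (cF n j c).symm.eq, ← mul_assoc (E n j) (E n j), idem]
          have pn : ‖E n j * g⁺ * E n j‖ ≤ R / 2 ^ n := by
            rw [pe, eE, ← mul_assoc]
            refine (norm_mul_le _ _).trans ?_
            calc _ ≤ R / 2 ^ n * 1 := by gcongr
              _ = _ := mul_one _
          have := aux_half _ p0 _ pn
          have e3 : (h - ((cellc R (n+1) (true, j) : ℝ) : ℂ) • (1 : H →L[ℂ] H)) * E (n+1) (true, j)
              = ((E n j * g⁺ * E n j - ((R / 2 ^ n / 2 : ℝ) : ℂ) • (1 : H →L[ℂ] H)) *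
                E (n+1) (true, j)) := by
            have hi := idem (n+1) (true, j)
            rw [pe, e1, e2, hg]
            generalize E (n+1) (true, j) = X at hi
            simp only [sub_mul, mul_assoc, hi, smul_mul_assoc, one_mul,
              Complex.ofReal_add, add_smul, add_mul]
            abel
          rw [e3]
          refine (norm_mul_le _ _).trans ?_
          rw [e2]
          calc _ ≤ R / 2 ^ n / 2 * 1 := by gcongr
            _ = _ := mul_one _
    intro n j g hg
    rw [Set.mem_singleton_iff.1 hg]
    exact ⟨_, key n j⟩

lemma exists_psys {ι : Type*} (h : ι → (H →L[ℂ] H)) (hsa : ∀ i, IsSelfAdjoint (h i))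
    (hc : ∀ i j, Commute (h i) (h j)) (s : Finset ι) :
    Nonempty (PSys (Set.image h (s : Set ι)) s.card) := by
  classical
  induction s using Finset.induction_on with
  | empty => exact ⟨by simpa using! PSys.empty⟩
  | insert a s ha ih =>
    obtain ⟨P⟩ := ih
    obtain ⟨Q⟩ := exists_single (h a) (hsa a)
    have := PSys.combine P Q (by
      rintro _ ⟨i, _, rfl⟩ _ rfl
      exact hc _ _)
    rw [Finset.card_insert_of_notMem ha, Finset.coe_insert, Set.image_insert_eq,
      Set.insert_eq, Set.union_comm]
    exact ⟨this⟩

end part1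

section part2

lemma seq_logconvex (u : ℕ → ℝ) (K ρ : ℝ) (hρ : 0 < ρ) (h0 : ∀ n, 0 ≤ u n)
    (hc : ∀ n, u (n+1) ^ 2 ≤ u n * u (n+2)) (hb : ∀ n, u n ≤ K * ρ ^ n) : u 1 ≤ ρ * u 0 := by
  by_contra! hlt
  have h1 : 0 < u 1 := lt_of_le_of_lt (mul_nonneg hρ.le (h0 0)) hlt
  have hu0 : 0 < u 0 := by
    rcases (h0 0).lt_or_eq with h | h
    · exact h
    · have := hc 0
      rw [← h] at this
      simp at this
      nlinarith
  set q := u 1 / u 0 with hq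
  have hqρ : ρ < q := by rw [hq, lt_div_iff₀ hu0]; exact hlt
  have hq0 : 0 < q := hρ.trans hqρ
  have key : ∀ n, 0 < u n ∧ q * u n ≤ u (n+1) := by
    intro n
    induction n with
    | zero => exact ⟨hu0, by rw [hq]; field_simp; simp⟩
    | succ n ih =>
      obtain ⟨i1, i2⟩ := ih
      have p1 : 0 < u (n+1) := lt_of_lt_of_le (mul_pos hq0 i1) i2
      refine ⟨p1, ?_⟩
      have := hc n
      have h3 : u n * (q * u (n+1)) ≤ u n * u (n+2) := by nlinarith
      exact le_of_mul_le_mul_left h3 i1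
  have key2 : ∀ n, q ^ n * u 0 ≤ u n := by
    intro n
    induction n with
    | zero => simp
    | succ n ih =>
      calc q ^ (n+1) * u 0 = q * (q ^ n * u 0) := by ring
        _ ≤ q * u n := by gcongr
        _ ≤ _ := (key n).2
  obtain ⟨n, hn⟩ := pow_unbounded_of_one_lt (K / u 0) ((one_lt_div hρ).2 hqρ)
  have := (key2 n).trans (hb n)
  rw [div_pow, div_lt_div_iff₀ hu0 (by positivity)] at hn
  linarith

lemma end_growth {V : Type*} [NormedAddCommGroup V] [NormedSpace ℂ V] (L R : Module.End ℂ V)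
    (hLR : Commute L R) (ρ : ℝ) (hρ : 0 < ρ) (hR : ∀ Z, ‖R Z‖ ≤ ρ * ‖Z‖) (M : ℕ) :
    ∀ Z, ((L + R) ^ M) Z = 0 → ∃ K : ℝ, ∀ n, ‖(L ^ n) Z‖ ≤ K * (2 * ρ) ^ n := by
  induction M with
  | zero => intro Z hZ; exact ⟨0, fun n => by simp at hZ; simp [hZ]⟩
  | succ M ih =>
    intro Z hZ
    rw [pow_succ, Module.End.mul_apply] at hZ
    obtain ⟨K', hK'⟩ := ih _ hZ
    refine ⟨max ‖Z‖ (K' / ρ), fun n => ?_⟩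
    induction n with
    | zero => simp
    | succ n ihn =>
      have e : (L ^ (n+1)) Z = (L ^ n) ((L + R) Z) - R ((L ^ n) Z) := by
        have : (L ^ n) (R Z) = R ((L ^ n) Z) := by
          have := congrArg (fun X : Module.End ℂ V => X Z) (hLR.pow_left n).eq
          simpa using this
        rw [pow_succ, Module.End.mul_apply, LinearMap.add_apply, map_add, this]; abel
      set K := max ‖Z‖ (K' / ρ)
      have hK : K' ≤ ρ * K := by
        have : K' / ρ ≤ K := le_max_right _ _
        rw [div_le_iff₀ hρ] at this; linarith
      rw [e]
      calc _ ≤ ‖(L ^ n) ((L + R) Z)‖ + ‖R ((L ^ n) Z)‖ := norm_sub_le _ _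
        _ ≤ K' * (2 * ρ) ^ n + ρ * (K * (2 * ρ) ^ n) := by
          gcongr
          · exact hK' n
          · exact (hR _).trans (by gcongr)
        _ ≤ (ρ * K) * (2 * ρ) ^ n + ρ * (K * (2 * ρ) ^ n) := by gcongr
        _ = _ := by ring

variable {H₁ H₂ : Type*} [NormedAddCommGroup H₁] [InnerProductSpace ℂ H₁] [CompleteSpace H₁]
  [NormedAddCommGroup H₂] [InnerProductSpace ℂ H₂] [CompleteSpace H₂]

lemma norm_star_apply (N : H₂ →L[ℂ] H₂) (hN : IsStarNormal N) (v : H₂) : ‖star N v‖ = ‖N v‖ := by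
  have h : star N * N = N * star N := hN.star_comm_self.eq
  have h1 : ‖N v‖ ^ 2 = ‖star N v‖ ^ 2 := by
    have e1 := ContinuousLinearMap.apply_norm_sq_eq_inner_adjoint_left N v
    have e2 := ContinuousLinearMap.apply_norm_sq_eq_inner_adjoint_left (star N) v
    rw [e1, e2, ← ContinuousLinearMap.star_eq_adjoint, ← ContinuousLinearMap.star_eq_adjoint,
      star_star]
    have : star N ∘L N = N ∘L star N := h
    rw [this]
  exact ((sq_eq_sq₀ (norm_nonneg _) (norm_nonneg _)).1 h1).symm

lemma normal_growth (N : H₂ →L[ℂ] H₂) (hN : IsStarNormal N) (w : H₂) (K ρ : ℝ) (hρ : 0 < ρ)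
    (hb : ∀ n, ‖(N ^ n) w‖ ≤ K * ρ ^ n) : ‖N w‖ ≤ ρ * ‖w‖ := by
  have := seq_logconvex (fun n => ‖(N ^ n) w‖) K ρ hρ (fun n => norm_nonneg _) ?_ hb
  · simpa using this
  · intro n
    have e1 : (N ^ (n+1)) w = N ((N ^ n) w) := by rw [pow_succ']; rfl
    have e2 : (N ^ (n+2)) w = N (N ((N ^ n) w)) := by rw [pow_succ', pow_succ']; rfl
    simp only [e1, e2]
    set v := (N ^ n) w
    rw [ContinuousLinearMap.apply_norm_sq_eq_inner_adjoint_right N v]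
    refine (RCLike.re_le_norm _).trans ((norm_inner_le_norm _ _).trans ?_)
    rw [← norm_star_apply N hN (N v)]
    rfl

/-- the elementary operator -/
def elemOp {ι : Type*} [Fintype ι] (A : ι → (H₁ →L[ℂ] H₁)) (B : ι → (H₂ →L[ℂ] H₂)) :
    Module.End ℂ (H₁ →L[ℂ] H₂) where
  toFun S := ∑ i, B i ∘L S ∘L A i
  map_add' S T := by simp [add_comp, comp_add, Finset.sum_add_distrib]
  map_smul' c S := by simp [Finset.smul_sum]

lemma elemOp_apply {ι : Type*} [Fintype ι] (A : ι → (H₁ →L[ℂ] H₁)) (B : ι → (H₂ →L[ℂ] H₂))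
    (S : H₁ →L[ℂ] H₂) : elemOp A B S = ∑ i, B i ∘L S ∘L A i := rfl

lemma elemOp_comp {ι : Type*} [Fintype ι] (A : ι → (H₁ →L[ℂ] H₁)) (B : ι → (H₂ →L[ℂ] H₂))
    (E : H₁ →L[ℂ] H₁) (hE : ∀ i, Commute (A i) E) (S : H₁ →L[ℂ] H₂) :
    elemOp A B (S ∘L E) = elemOp A B S ∘L E := by
  simp only [elemOp_apply, ContinuousLinearMap.finsetSum_comp]
  refine Finset.sum_congr rfl fun i _ => ?_
  have : A i ∘L E = E ∘L A i := (hE i).eq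
  simp only [comp_assoc, this]

lemma elemOp_pow_comp {ι : Type*} [Fintype ι] (A : ι → (H₁ →L[ℂ] H₁)) (B : ι → (H₂ →L[ℂ] H₂))
    (E : H₁ →L[ℂ] H₁) (hE : ∀ i, Commute (A i) E) (S : H₁ →L[ℂ] H₂) (n : ℕ) :
    (elemOp A B ^ n) (S ∘L E) = (elemOp A B ^ n) S ∘L E := by
  induction n with
  | zero => simp
  | succ n ih => rw [pow_succ', Module.End.mul_apply, ih, elemOp_comp A B E hE]; rfl

lemma cell_est {ι : Type*} [Fintype ι] (A : ι → (H₁ →L[ℂ] H₁)) (B : ι → (H₂ →L[ℂ] H₂))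
    (hB : ∀ c : ι → ℂ, IsStarNormal (∑ i, c i • B i)) (hBc : ∀ i j, Commute (B i) (B j))
    (E : H₁ →L[ℂ] H₁) (hE : ∀ i, Commute (A i) E) (hEi : E * E = E)
    (ε : ℝ) (hε : 0 < ε) (c : ι → ℂ)
    (hc : ∀ i, ‖(A i - c i • (1 : H₁ →L[ℂ] H₁)) * E‖ ≤ ε) (M : ℕ) (Z : H₁ →L[ℂ] H₂)
    (hZE : Z ∘L E = Z) (hZ : (elemOp A B ^ M) Z = 0) :
    ‖elemOp A B Z‖ ≤ (3 * (1 + ∑ i, ‖B i‖) * ε) * ‖Z‖ := by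
  set ρ := (1 + ∑ i, ‖B i‖) * ε with hρd
  have hs : 0 ≤ ∑ i, ‖B i‖ := Finset.sum_nonneg fun i _ => norm_nonneg _
  have hρ : 0 < ρ := by positivity
  set N := ∑ i, c i • B i with hN
  let L : Module.End ℂ (H₁ →L[ℂ] H₂) :=
    { toFun := fun S => N ∘L S
      map_add' := fun S T => by simp [comp_add]
      map_smul' := fun c S => by simp }
  let R : Module.End ℂ (H₁ →L[ℂ] H₂) := elemOp (fun i => (A i - c i • (1 : H₁ →L[ℂ] H₁)) * E) B
  have hL : ∀ S, L S = N ∘L S := fun S => rfl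
  have hNB : ∀ i, Commute N (B i) := by
    intro i
    rw [hN]
    exact Commute.sum_left _ _ _ fun j _ => (hBc j i).smul_left _
  have hLR : Commute L R := by
    refine LinearMap.ext fun S => ?_
    show N ∘L (elemOp _ B S) = elemOp _ B (N ∘L S)
    simp only [elemOp_apply, ContinuousLinearMap.comp_finsetSum]
    refine Finset.sum_congr rfl fun i _ => ?_
    have : N ∘L B i = B i ∘L N := (hNB i).eq
    rw [← comp_assoc, this]; simp only [comp_assoc]
  have hR : ∀ S, ‖R S‖ ≤ ρ * ‖S‖ := by
    intro S
    show ‖elemOp _ B S‖ ≤ _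
    rw [elemOp_apply]
    refine (norm_sum_le _ _).trans ?_
    have : ∀ i ∈ Finset.univ, ‖B i ∘L S ∘L ((A i - c i • (1 : H₁ →L[ℂ] H₁)) * E)‖ ≤
        ‖B i‖ * (‖S‖ * ε) := fun i _ => by
      refine (opNorm_comp_le _ _).trans ?_
      gcongr
      refine (opNorm_comp_le _ _).trans ?_
      gcongr
      exact hc i
    refine (Finset.sum_le_sum this).trans ?_
    rw [← Finset.sum_mul, hρd]
    have : 0 ≤ ‖S‖ * ε := by positivity
    nlinarith
  have hLn : ∀ n S, (L ^ n) S = (N ^ n) ∘L S := by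
    intro n S
    induction n with
    | zero => simp [ContinuousLinearMap.one_def]
    | succ n ih => rw [pow_succ', Module.End.mul_apply, ih, hL, pow_succ']; rfl
  have hD : ∀ S : H₁ →L[ℂ] H₂, S ∘L E = S → (L + R) S = elemOp A B S := by
    intro S hS
    show N ∘L S + elemOp _ B S = elemOp A B S
    rw [elemOp_apply, elemOp_apply, hN, ContinuousLinearMap.finsetSum_comp,
      ← Finset.sum_add_distrib]
    refine Finset.sum_congr rfl fun i _ => ?_
    have e1 : S ∘L ((A i - c i • (1 : H₁ →L[ℂ] H₁)) * E) = S ∘L A i - c i • S := by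
      have hA : A i * E = E * A i := (hE i).eq
      rw [sub_mul, hA, smul_mul_assoc, one_mul, comp_sub, ContinuousLinearMap.mul_def,
        ← comp_assoc, hS, comp_smul, hS]
    rw [e1, comp_sub, comp_smul, smul_comp]; abel
  have hDE : ∀ n, (elemOp A B ^ n) Z ∘L E = (elemOp A B ^ n) Z := fun n => by
    rw [← elemOp_pow_comp A B E hE, hZE]
  have hDM : ∀ n, ((L + R) ^ n) Z = (elemOp A B ^ n) Z := by
    intro n
    induction n with
    | zero => simp
    | succ n ih =>
      rw [pow_succ', Module.End.mul_apply, ih, hD _ (hDE n), pow_succ', Module.End.mul_apply]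
  obtain ⟨K, hK⟩ := end_growth L R hLR ρ hρ hR M Z (by rw [hDM, hZ])
  have hLZ : ‖L Z‖ ≤ (2 * ρ) * ‖Z‖ := by
    refine opNorm_le_bound _ (by positivity) fun v => ?_
    have := normal_growth N (hB c) (Z v) (K * ‖v‖) (2 * ρ) (by positivity) fun n => by
      have := hK n
      rw [hLn] at this
      calc ‖(N ^ n) (Z v)‖ = ‖((N ^ n) ∘L Z) v‖ := rfl
        _ ≤ ‖(N ^ n) ∘L Z‖ * ‖v‖ := le_opNorm _ _
        _ ≤ K * (2 * ρ) ^ n * ‖v‖ := by gcongr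
        _ = _ := by ring
    calc ‖L Z v‖ = ‖N (Z v)‖ := rfl
      _ ≤ 2 * ρ * ‖Z v‖ := this
      _ ≤ 2 * ρ * (‖Z‖ * ‖v‖) := by gcongr; exact le_opNorm _ _
      _ = _ := by ring
  rw [← hD Z hZE]
  calc ‖(L + R) Z‖ ≤ ‖L Z‖ + ‖R Z‖ := norm_add_le _ _
    _ ≤ 2 * ρ * ‖Z‖ + ρ * ‖Z‖ := add_le_add hLZ (hR Z)
    _ = _ := by rw [hρd]; ring

lemma cell_est_pow {ι : Type*} [Fintype ι] (A : ι → (H₁ →L[ℂ] H₁)) (B : ι → (H₂ →L[ℂ] H₂))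
    (hB : ∀ c : ι → ℂ, IsStarNormal (∑ i, c i • B i)) (hBc : ∀ i j, Commute (B i) (B j))
    (E : H₁ →L[ℂ] H₁) (hE : ∀ i, Commute (A i) E) (hEi : E * E = E) (hEn : ‖E‖ ≤ 1)
    (ε : ℝ) (hε : 0 < ε)
    (hc : ∀ i, ∃ c : ℂ, ‖(A i - c • (1 : H₁ →L[ℂ] H₁)) * E‖ ≤ ε) (M : ℕ) (T : H₁ →L[ℂ] H₂)
    (hT : (elemOp A B ^ M) T = 0) (r : ℕ) :
    ‖(elemOp A B ^ r) T ∘L E‖ ≤ (3 * (1 + ∑ i, ‖B i‖) * ε) ^ r * ‖T‖ := by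
  choose c hc using hc
  have hs : 0 ≤ ∑ i, ‖B i‖ := Finset.sum_nonneg fun i _ => norm_nonneg _
  induction r with
  | zero =>
    simp only [pow_zero, one_mul, Module.End.one_apply]
    refine (opNorm_comp_le _ _).trans ?_
    nlinarith [norm_nonneg T]
  | succ r ih =>
    have e : (elemOp A B ^ (r+1)) T ∘L E = elemOp A B ((elemOp A B ^ r) T ∘L E) := by
      rw [elemOp_comp A B E hE, pow_succ', Module.End.mul_apply]
    have hEE : E ∘L E = E := hEi
    rw [e]
    refine (cell_est A B hB hBc E hE hEi ε hε c hc M _ ?_ ?_).trans ?_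
    · rw [comp_assoc, hEE]
    · rw [elemOp_pow_comp A B E hE, ← Module.End.mul_apply, ← pow_add, add_comm, pow_add,
        Module.End.mul_apply, hT, map_zero, zero_comp]
    · calc _ ≤ (3 * (1 + ∑ i, ‖B i‖) * ε) * ((3 * (1 + ∑ i, ‖B i‖) * ε) ^ r * ‖T‖) := by
            gcongr
        _ = _ := by ring

end part2

section part3

lemma final_limit (h : ℕ → ℝ) (hm : Monotone h) (Hs C : ℝ) (hlim : Filter.Tendsto h Filter.atTop (nhds Hs))
    (e : ℕ → ℕ → ℝ) (he : ∀ n0, Filter.Tendsto (e n0) Filter.atTop (nhds 0))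
    (hmain : ∀ n0 n, n0 ≤ n → h n ≤ C * √(Hs - h n) + C * √(h n - h n0) + e n0 n) : Hs ≤ 0 := by
  have h1 : ∀ n0, Hs ≤ C * √(Hs - h n0) := by
    intro n0
    have t : Filter.Tendsto (fun n => C * √(Hs - h n) + C * √(h n - h n0) + e n0 n) Filter.atTop
        (nhds (C * √(Hs - Hs) + C * √(Hs - h n0) + 0)) := by
      refine Filter.Tendsto.add (Filter.Tendsto.add ?_ ?_) (he n0)
      · exact (Real.continuous_sqrt.tendsto _ |>.comp (tendsto_const_nhds.sub hlim)).const_mul C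
      · exact (Real.continuous_sqrt.tendsto _ |>.comp (hlim.sub tendsto_const_nhds)).const_mul C
    have := le_of_tendsto_of_tendsto hlim t
      (Filter.eventually_atTop.2 ⟨n0, fun n hn => hmain n0 n hn⟩)
    simpa using this
  have t : Filter.Tendsto (fun n => C * √(Hs - h n)) Filter.atTop (nhds (C * √(Hs - Hs))) :=
    (Real.continuous_sqrt.tendsto _ |>.comp (tendsto_const_nhds.sub hlim)).const_mul C
  have := ge_of_tendsto' t h1
  simpa using this

variable {H : Type*} [NormedAddCommGroup H] [InnerProductSpace ℂ H]

/-- orthonormal-or-zero families -/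
structure OZ {J : Type*} (u : J → H) : Prop where
  ho : ∀ j j', j ≠ j' → inner ℂ (u j) (u j') = 0
  hn : ∀ j, (inner ℂ (u j) (u j) : ℂ) • u j = u j

noncomputable def pr {J : Type*} [Fintype J] (u : J → H) : H →L[ℂ] H :=
  ∑ j, (innerSL ℂ (u j)).smulRight (u j)

lemma pr_apply {J : Type*} [Fintype J] (u : J → H) (v : H) :
    pr u v = ∑ j, (inner ℂ (u j) v : ℂ) • u j := by
  simp [pr]

lemma pr_symm {J : Type*} [Fintype J] (u : J → H) (v w : H) :
    (inner ℂ (pr u v) w : ℂ) = inner ℂ v (pr u w) := by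
  rw [pr_apply, pr_apply, sum_inner, inner_sum]
  refine Finset.sum_congr rfl fun j _ => ?_
  rw [inner_smul_left, inner_smul_right, inner_conj_symm]; ring

lemma OZ.pr_self {J : Type*} [Fintype J] {u : J → H} (hu : OZ u) (j : J) : pr u (u j) = u j := by
  classical
  rw [pr_apply, Finset.sum_eq_single j]
  · exact hu.hn j
  · intro j' _ hj; rw [hu.ho j' j hj, zero_smul]
  · simp

lemma pr_pr {J J' : Type*} [Fintype J] [Fintype J'] {u : J → H} {u' : J' → H}
    (h : ∀ j, pr u' (u j) = u j) (v : H) : pr u' (pr u v) = pr u v := by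
  rw [pr_apply u, map_sum]
  exact Finset.sum_congr rfl fun j _ => by rw [map_smul, h]

lemma pr_pr' {J J' : Type*} [Fintype J] [Fintype J'] {u : J → H} {u' : J' → H}
    (h : ∀ j, pr u' (u j) = u j) (v : H) : pr u (pr u' v) = pr u v := by
  rw [pr_apply u, pr_apply u]
  exact Finset.sum_congr rfl fun j _ => by rw [← pr_symm, h]

lemma inner_pr {J : Type*} [Fintype J] (u : J → H) (v : H) :
    (inner ℂ v (pr u v) : ℂ) = ((∑ j, ‖(inner ℂ (u j) v : ℂ)‖ ^ 2 : ℝ) : ℂ) := by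
  rw [pr_apply, inner_sum]
  push_cast
  refine Finset.sum_congr rfl fun j _ => ?_
  rw [inner_smul_right, ← inner_conj_symm v (u j), Complex.mul_conj, Complex.normSq_eq_norm_sq]
  push_cast; rfl

lemma OZ.pr_norm {J : Type*} [Fintype J] {u : J → H} (hu : OZ u) (v : H) :
    ‖pr u v‖ ^ 2 = ∑ j, ‖(inner ℂ (u j) v : ℂ)‖ ^ 2 := by
  have h1 : (inner ℂ (pr u v) (pr u v) : ℂ) = ((∑ j, ‖(inner ℂ (u j) v : ℂ)‖ ^ 2 : ℝ) : ℂ) := by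
    rw [pr_symm, pr_pr hu.pr_self, inner_pr]
  rw [← inner_self_eq_norm_sq (𝕜 := ℂ), h1]
  exact Complex.ofReal_re _

lemma OZ.pr_sub_norm {J J' : Type*} [Fintype J] [Fintype J'] {u : J → H} {u' : J' → H}
    (hu : OZ u) (hu' : OZ u') (h : ∀ j, pr u' (u j) = u j) (v : H) :
    ‖pr u' v - pr u v‖ ^ 2 = ‖pr u' v‖ ^ 2 - ‖pr u v‖ ^ 2 := by
  have h1 : (inner ℂ (pr u' v) (pr u v) : ℂ) = inner ℂ (pr u v) (pr u v) := by
    rw [pr_symm, pr_pr h, pr_symm u, pr_pr hu.pr_self]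
  rw [@norm_sub_sq ℂ, h1, inner_self_eq_norm_sq]; ring

lemma OZ.pr_le {J : Type*} [Fintype J] {u : J → H} (hu : OZ u) (v : H) : ‖pr u v‖ ≤ ‖v‖ := by
  have h1 : ‖pr u v‖ ^ 2 = RCLike.re (inner ℂ (pr u v) v : ℂ) := by
    rw [← inner_self_eq_norm_sq (𝕜 := ℂ), pr_symm, pr_pr hu.pr_self, ← pr_symm]
  have h2 : ‖pr u v‖ ^ 2 ≤ ‖pr u v‖ * ‖v‖ := by
    rw [h1]; exact (RCLike.re_le_norm _).trans (norm_inner_le_norm _ _)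
  by_contra! hlt
  have : 0 < ‖pr u v‖ := (norm_nonneg v).trans_lt hlt
  nlinarith

variable [CompleteSpace H] {H₂ : Type*} [NormedAddCommGroup H₂] [InnerProductSpace ℂ H₂]
  [CompleteSpace H₂]

lemma hasSum_col {κ : Type*} (b : HilbertBasis κ ℂ H₂) {J : Type*} [Fintype J] (w : J → H)
    (S : H →L[ℂ] H₂) :
    HasSum (fun f => ∑ j, ‖(inner ℂ (w j) (adjoint S (b f)) : ℂ)‖ ^ 2) (∑ j, ‖S (w j)‖ ^ 2) := by
  refine hasSum_sum fun j _ => ?_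
  have h := b.hasSum_inner_mul_inner (S (w j)) (S (w j))
  rw [inner_self_eq_norm_sq_to_K] at h
  have e : ∀ f, (inner ℂ (S (w j)) (b f) * inner ℂ (b f) (S (w j)) : ℂ) =
      ((‖(inner ℂ (w j) (adjoint S (b f)) : ℂ)‖ ^ 2 : ℝ) : ℂ) := by
    intro f
    rw [adjoint_inner_right, ← inner_conj_symm (b f), Complex.mul_conj, Complex.normSq_eq_norm_sq]
  simp only [e] at h
  have h' : HasSum (fun f => ((‖(inner ℂ (w j) (adjoint S (b f)) : ℂ)‖ ^ 2 : ℝ) : ℂ))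
    ((‖S (w j)‖ ^ 2 : ℝ) : ℂ) := by
    rw [Complex.ofReal_pow ‖S (w j)‖ 2]
    exact h
  exact_mod_cast h'

/-- R2 -/
lemma col_sub {J J' : Type*} [Fintype J] [Fintype J'] {u : J → H} {u' : J' → H}
    (hu : OZ u) (hu' : OZ u') (h : ∀ j, pr u' (u j) = u j) (S : H →L[ℂ] H₂) :
    ∑ j, ‖S (u' j - pr u (u' j))‖ ^ 2 = ∑ j, ‖S (u' j)‖ ^ 2 - ∑ j, ‖S (u j)‖ ^ 2 := by
  obtain ⟨_, b, -⟩ := exists_hilbertBasis ℂ H₂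
  have h1 := hasSum_col b (fun j => u' j - pr u (u' j)) S
  have h2 := (hasSum_col b u' S).sub (hasSum_col b u S)
  refine h1.unique ?_
  refine Eq.subst (motive := fun F => HasSum F _) (funext fun f => ?_) h2
  symm
  set g := adjoint S (b f)
  rw [← hu.pr_norm, ← hu'.pr_norm, ← hu.pr_sub_norm hu' h]
  have : pr u' g - pr u g = pr u' (g - pr u g) := by
    rw [map_sub, pr_pr h]
  rw [this, hu'.pr_norm]
  refine Finset.sum_congr rfl fun j _ => ?_
  rw [inner_sub_left, inner_sub_right, pr_symm]

lemma col_mono {J J' : Type*} [Fintype J] [Fintype J'] {u : J → H} {u' : J' → H}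
    (hu : OZ u) (hu' : OZ u') (h : ∀ j, pr u' (u j) = u j) (S : H →L[ℂ] H₂) :
    ∑ j, ‖S (u j)‖ ^ 2 ≤ ∑ j, ‖S (u' j)‖ ^ 2 := by
  have := col_sub hu hu' h S
  have h2 : 0 ≤ ∑ j, ‖S (u' j - pr u (u' j))‖ ^ 2 := Finset.sum_nonneg fun _ _ => by positivity
  linarith

/-- R3 -/
lemma col_w {J J' L : Type*} [Fintype J] [Fintype J'] [Fintype L] {u : J → H} {u' : J' → H}
    (hu : OZ u) (hu' : OZ u') (h : ∀ j, pr u' (u j) = u j) (S : H →L[ℂ] H₂)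
    (w : L → H) (η : ℝ) (hw : ∀ k, ∑ j, ‖(inner ℂ (w j) k : ℂ)‖ ^ 2 ≤ η ^ 2 * ‖k‖ ^ 2)
    (hw0 : ∀ j, pr u (w j) = 0) :
    ∑ j, ‖S (pr u' (w j))‖ ^ 2 ≤ η ^ 2 * (∑ j, ‖S (u' j)‖ ^ 2 - ∑ j, ‖S (u j)‖ ^ 2) := by
  obtain ⟨_, b, -⟩ := exists_hilbertBasis ℂ H₂
  have h1 := hasSum_col b (fun j => pr u' (w j)) S
  have h2 := ((hasSum_col b u' S).sub (hasSum_col b u S)).mul_left (η ^ 2)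
  refine hasSum_le (fun f => ?_) h1 h2
  set g := adjoint S (b f)
  rw [← hu.pr_norm, ← hu'.pr_norm, ← hu.pr_sub_norm hu' h]
  refine le_trans (le_of_eq ?_) (hw _)
  refine Finset.sum_congr rfl fun j _ => ?_
  rw [pr_symm, inner_sub_right, ← pr_symm u, hw0, inner_zero_left, sub_zero]

end part3

section part4

variable {H : Type*} [NormedAddCommGroup H] [InnerProductSpace ℂ H] [CompleteSpace H]
  {S : Set (H →L[ℂ] H)} {r : ℕ}

namespace PSys

lemma EE (P : PSys S r) (n : ℕ) (j : P.J n) (v : H) : P.E n j (P.E n j v) = P.E n j v :=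
  DFunLike.congr_fun (P.idem n j) v

lemma EE' (P : PSys S r) (n : ℕ) (j j' : P.J n) (h : j ≠ j') (v : H) :
    P.E n j (P.E n j' v) = 0 :=
  DFunLike.congr_fun (P.orth n j j' h) v

lemma Esum (P : PSys S r) (n : ℕ) (v : H) : ∑ j, P.E n j v = v := by
  have := DFunLike.congr_fun (P.sum n) v
  simpa using this

lemma Esymm (P : PSys S r) (n : ℕ) (j : P.J n) (v w : H) :
    (inner ℂ (P.E n j v) w : ℂ) = inner ℂ v (P.E n j w) := by
  rw [← adjoint_inner_right, ← star_eq_adjoint, P.sa]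

lemma E_norm (P : PSys S r) (n : ℕ) (j : P.J n) : ‖P.E n j‖ ≤ 1 :=
  (IsStarProjection.mk (P.idem n j) (P.sa n j)).norm_le

lemma sum_norm (P : PSys S r) (n : ℕ) (v : H) : ∑ j, ‖P.E n j v‖ ^ 2 = ‖v‖ ^ 2 := by
  have h : ∀ j, ‖P.E n j v‖ ^ 2 = RCLike.re (inner ℂ v (P.E n j v) : ℂ) := by
    intro j
    rw [← inner_self_eq_norm_sq (𝕜 := ℂ), Esymm, EE]
  simp only [h]
  rw [← map_sum, ← inner_sum, Esum, inner_self_eq_norm_sq]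

noncomputable def u (P : PSys S r) (x : H) (n : ℕ) (j : P.J n) : H :=
  ((‖P.E n j x‖⁻¹ : ℝ) : ℂ) • P.E n j x

variable (P : PSys S r) (x : H)

lemma E_u (n : ℕ) (j : P.J n) : P.E n j (P.u x n j) = P.u x n j := by
  rw [u, map_smul, EE]

lemma E_u' (n : ℕ) (j j' : P.J n) (h : j ≠ j') : P.E n j (P.u x n j') = 0 := by
  rw [u, map_smul, EE' _ _ _ _ h, smul_zero]

lemma u_back (n : ℕ) (j : P.J n) : P.E n j x = (‖P.E n j x‖ : ℂ) • P.u x n j := by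
  by_cases h : P.E n j x = 0
  · simp [u, h]
  · have : (‖P.E n j x‖ : ℂ) ≠ 0 := by simpa using h
    rw [u, smul_smul]; push_cast; rw [mul_inv_cancel₀ this, one_smul]

lemma u_norm (n : ℕ) (j : P.J n) : ‖P.u x n j‖ ≤ 1 := by
  rw [u, norm_smul]
  simp only [Complex.norm_real, norm_inv, norm_norm]
  exact inv_mul_le_one

lemma u_oz (n : ℕ) : OZ (P.u x n) where
  ho j j' h := by
    rw [← E_u, Esymm, E_u' _ _ _ _ _ h, inner_zero_right]
  hn j := by
    by_cases h : P.E n j x = 0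
    · simp [u, h]
    · have h1 : ‖P.u x n j‖ = 1 := by
        rw [u, norm_smul]
        simp [h]
      rw [inner_self_eq_norm_sq_to_K, h1]; simp

lemma pr_Ex (n : ℕ) (j : P.J n) : pr (P.u x n) (P.E n j x) = P.E n j x := by
  rw [u_back, map_smul, (P.u_oz x n).pr_self]

lemma pr_Eu {n n' : ℕ} (hn : n ≤ n') (j : P.J n) (j' : P.J n') :
    pr (P.u x n') (P.E n' j' (P.u x n j)) = P.E n' j' (P.u x n j) := by
  rw [u, map_smul, map_smul]
  congr 1
  rcases P.nest n n' hn j j' with h | h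
  · have := DFunLike.congr_fun h x
    have h' : P.E n' j' (P.E n j x) = 0 := this
    rw [h', map_zero]
  · have := DFunLike.congr_fun h x
    have h' : P.E n' j' (P.E n j x) = P.E n' j' x := this
    rw [h', pr_Ex]

lemma pr_u {n n' : ℕ} (hn : n ≤ n') (j : P.J n) :
    pr (P.u x n') (P.u x n j) = P.u x n j := by
  conv_lhs => rw [← P.Esum n' (P.u x n j)]
  rw [map_sum]
  simp only [P.pr_Eu x hn]
  rw [Esum]

variable (A : H →L[ℂ] H)

lemma comm_apply {n : ℕ} {j : P.J n} (h : Commute A (P.E n j)) (v : H) :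
    P.E n j (A v) = A (P.E n j v) :=
  (DFunLike.congr_fun h.eq v).symm

lemma approx_pr {n n' : ℕ} (hn : n ≤ n') (j : P.J n) (hA : ∀ j', Commute A (P.E n' j'))
    (ε : ℝ) (hε : 0 ≤ ε) 
    (hc : ∀ j', ∃ c : ℂ, ‖(A - c • (1 : H →L[ℂ] H)) * P.E n' j'‖ ≤ ε) :
    ‖A (P.u x n j) - pr (P.u x n') (A (P.u x n j))‖ ≤ 2 * ε := by
  classical
  choose c hc using hc
  set y := P.u x n j with hy
  set z := ∑ j', c j' • P.E n' j' y with hz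
  have hpz : pr (P.u x n') z = z := by
    rw [hz, map_sum]
    exact Finset.sum_congr rfl fun j' _ => by rw [map_smul, hy, P.pr_Eu x hn]
  have hEz : ∀ j', P.E n' j' z = c j' • P.E n' j' y := by
    intro j'
    rw [hz, map_sum, Finset.sum_eq_single j']
    · rw [map_smul, EE]
    · intro l _ hl; rw [map_smul, EE' _ _ _ _ hl.symm, smul_zero]
    · simp
  have h1 : ‖A y - z‖ ≤ ε := by
    have h2 : ‖A y - z‖ ^ 2 ≤ ε ^ 2 := by
      calc ‖A y - z‖ ^ 2 = ∑ j', ‖P.E n' j' (A y - z)‖ ^ 2 := (P.sum_norm n' _).symm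
        _ ≤ ∑ j', ε ^ 2 * ‖P.E n' j' y‖ ^ 2 := by
          refine Finset.sum_le_sum fun j' _ => ?_
          have : P.E n' j' (A y - z) = ((A - c j' • (1 : H →L[ℂ] H)) * P.E n' j') (P.E n' j' y) := by
            rw [map_sub, hEz, P.comm_apply A (hA j')]
            change _ = (A - c j' • (1 : H →L[ℂ] H)) (P.E n' j' (P.E n' j' y))
            rw [EE]
            simp
          rw [this, ← mul_pow]
          gcongr
          exact (le_opNorm _ _).trans (by gcongr; exact hc j')
        _ = ε ^ 2 * ‖y‖ ^ 2 := by rw [← Finset.mul_sum, P.sum_norm]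
        _ ≤ ε ^ 2 * 1 ^ 2 := by gcongr; exact P.u_norm x n j
        _ = ε ^ 2 := by ring
    exact (pow_le_pow_iff_left₀ (norm_nonneg _) hε two_ne_zero).1 h2
  have h3 : A y - pr (P.u x n') (A y) = (A y - z) - pr (P.u x n') (A y - z) := by
    rw [map_sub, hpz]; abel
  rw [h3]
  have := (P.u_oz x n').pr_le (A y - z)
  linarith [norm_sub_le (A y - z) (pr (P.u x n') (A y - z))]

lemma pr_Au {n : ℕ} (j : P.J n) (hA : ∀ j, Commute A (P.E n j)) :
    pr (P.u x n) (A (P.u x n j)) = (inner ℂ (P.u x n j) (A (P.u x n j)) : ℂ) • P.u x n j := by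
  classical
  rw [pr_apply, Finset.sum_eq_single j]
  · intro j' _ h
    have : (inner ℂ (P.u x n j') (A (P.u x n j)) : ℂ) = 0 := by
      rw [← P.E_u x n j', Esymm, P.comm_apply A (hA j'), P.E_u' _ _ _ _ h, map_zero,
        inner_zero_right]
    rw [this, zero_smul]
  · simp

noncomputable def w (n : ℕ) (j : P.J n) : H :=
  A (P.u x n j) - pr (P.u x n) (A (P.u x n j))

lemma E_w {n : ℕ} (j : P.J n) (hA : ∀ j, Commute A (P.E n j)) :
    P.E n j (P.w x A n j) = P.w x A n j := by
  rw [w, P.pr_Au x A j hA, map_sub, map_smul, P.comm_apply A (hA j), E_u]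

lemma pr_w (n : ℕ) (j : P.J n) : pr (P.u x n) (P.w x A n j) = 0 := by
  rw [w, map_sub, pr_pr (P.u_oz x n).pr_self, sub_self]

lemma w_bessel {n : ℕ} (hA : ∀ j, Commute A (P.E n j)) (η : ℝ)
    (hw : ∀ j, ‖P.w x A n j‖ ≤ η) (k : H) :
    ∑ j, ‖(inner ℂ (P.w x A n j) k : ℂ)‖ ^ 2 ≤ η ^ 2 * ‖k‖ ^ 2 := by
  rw [← P.sum_norm n k, Finset.mul_sum]
  refine Finset.sum_le_sum fun j _ => ?_
  rw [← P.E_w x A j hA, Esymm, ← mul_pow]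
  gcongr
  exact (norm_inner_le_norm _ _).trans (by gcongr; exact hw j)

/-- `∑_j ‖S w_j‖² ≤ η² (H - h_n)` -/
lemma sum_Sw {H₂ : Type*} [NormedAddCommGroup H₂] [InnerProductSpace ℂ H₂] [CompleteSpace H₂]
    (Z : H →L[ℂ] H₂) (hA : ∀ n j, Commute A (P.E n j)) (K : ℝ) (hK : 0 ≤ K)
    (hc : ∀ n j, ∃ c : ℂ, ‖(A - c • (1 : H →L[ℂ] H)) * P.E n j‖ ≤ K / 2 ^ n) (Hs : ℝ)
    (hHs : ∀ n, ∑ j, ‖Z (P.u x n j)‖ ^ 2 ≤ Hs) (n : ℕ) :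
    ∑ j, ‖Z (P.w x A n j)‖ ^ 2 ≤ (2 * (K / 2 ^ n)) ^ 2 * (Hs - ∑ j, ‖Z (P.u x n j)‖ ^ 2) := by
  have hw : ∀ j, ‖P.w x A n j‖ ≤ 2 * (K / 2 ^ n) := fun j =>
    P.approx_pr x A le_rfl j (hA n) _ (by positivity) (hc n)
  have h1 : ∀ n', n ≤ n' → ∑ j, ‖Z (pr (P.u x n') (P.w x A n j))‖ ^ 2 ≤
      (2 * (K / 2 ^ n)) ^ 2 * (Hs - ∑ j, ‖Z (P.u x n j)‖ ^ 2) := by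
    intro n' hn
    refine (col_w (P.u_oz x n) (P.u_oz x n') (P.pr_u x hn) Z _ _ (P.w_bessel x A (hA n) _ hw)
      (P.pr_w x A n)).trans ?_
    gcongr
    exact hHs n'
  have h2 : ∀ j, Filter.Tendsto (fun n' => pr (P.u x n') (P.w x A n j)) Filter.atTop
      (nhds (P.w x A n j)) := by
    intro j
    rw [tendsto_iff_norm_sub_tendsto_zero]
    have t : Filter.Tendsto (fun n' : ℕ => 2 * (K / 2 ^ n')) Filter.atTop (nhds 0) := by
      have := (tendsto_pow_atTop_nhds_zero_of_lt_one (r := (1/2 : ℝ)) (by norm_num)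
        (by norm_num)).const_mul (2 * K)
      simp only [mul_zero] at this
      refine this.congr fun n' => ?_
      rw [div_pow, one_pow]; ring
    refine squeeze_zero' (Filter.Eventually.of_forall fun _ => norm_nonneg _) ?_ t
    refine Filter.eventually_atTop.2 ⟨n, fun n' hn => ?_⟩
    have e : pr (P.u x n') (P.w x A n j) - P.w x A n j =
        -(A (P.u x n j) - pr (P.u x n') (A (P.u x n j))) := by
      rw [w, map_sub, pr_pr (P.pr_u x hn)]; abel
    rw [e, norm_neg]
    exact P.approx_pr x A hn j (hA n') _ (by positivity) (hc n')
  have h3 : Filter.Tendsto (fun n' => ∑ j, ‖Z (pr (P.u x n') (P.w x A n j))‖ ^ 2) Filter.atTop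
      (nhds (∑ j, ‖Z (P.w x A n j)‖ ^ 2)) := by
    refine tendsto_finsetSum _ fun j _ => ?_
    exact (((Z.continuous.tendsto _).comp (h2 j)).norm).pow 2
  exact le_of_tendsto h3 (Filter.eventually_atTop.2 ⟨n, h1⟩)

end PSys
end part4

section part5

variable {H : Type*} [NormedAddCommGroup H] [InnerProductSpace ℂ H] [CompleteSpace H]
  {H₂ : Type*} [NormedAddCommGroup H₂] [InnerProductSpace ℂ H₂] [CompleteSpace H₂]
  {S : Set (H →L[ℂ] H)} {r : ℕ}

lemma sum_mul_le_of_sq {J : Type*} [Fintype J] (f g : J → ℝ) (a b : ℝ) (ha : 0 ≤ a) (hb : 0 ≤ b)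
    (hf : ∑ j, f j ^ 2 ≤ a ^ 2) (hg : ∑ j, g j ^ 2 ≤ b ^ 2) : ∑ j, f j * g j ≤ a * b := by
  refine (Real.sum_mul_le_sqrt_mul_sqrt _ f g).trans ?_
  gcongr
  · exact Real.sqrt_le_iff.2 ⟨ha, hf⟩
  · exact Real.sqrt_le_iff.2 ⟨hb, hg⟩

lemma cross_bound (P : PSys S r) (x : H) (A D : H →L[ℂ] H) {n0 n : ℕ} 
    (hA : ∀ j, Commute A (P.E n j)) (η : ℝ) (hη : 0 ≤ η)
    (hw : ∀ j, ‖P.w x A n j‖ ≤ η) :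
    ‖∑ j, (inner ℂ (P.w x A n j) (D (pr (P.u x n0) (P.u x n j))) : ℂ)‖ ≤
      Fintype.card (P.J n0) * (η * ‖D‖) := by
  have e : ∑ j, (inner ℂ (P.w x A n j) (D (pr (P.u x n0) (P.u x n j))) : ℂ) =
      ∑ j0, ∑ j, (inner ℂ (P.u x n0 j0) (P.u x n j) : ℂ) *
        inner ℂ (P.w x A n j) (D (P.u x n0 j0)) := by
    rw [Finset.sum_comm]
    refine Finset.sum_congr rfl fun j _ => ?_
    rw [pr_apply, map_sum, inner_sum]
    refine Finset.sum_congr rfl fun j0 _ => ?_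
    rw [map_smul, inner_smul_right]
  rw [e]
  refine (norm_sum_le _ _).trans ?_
  rw [← nsmul_eq_mul, ← Finset.card_univ]
  refine Finset.sum_le_card_nsmul _ _ _ fun j0 _ => ?_
  refine (norm_sum_le _ _).trans ?_
  simp only [norm_mul]
  rw [← one_mul (η * ‖D‖)]
  refine sum_mul_le_of_sq _ _ _ _ (by norm_num) (by positivity) ?_ ?_
  · simp only [norm_inner_symm (P.u x n0 j0)]
    rw [← (P.u_oz x n).pr_norm]
    gcongr
    exact ((P.u_oz x n).pr_le _).trans (P.u_norm x n0 j0)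
  · refine (P.w_bessel x A hA η hw _).trans ?_
    rw [mul_pow]
    gcongr
    refine (le_opNorm _ _).trans ?_
    exact mul_le_of_le_one_right (norm_nonneg _) (P.u_norm x n0 j0)

lemma col_bounds {ι : Type*} [Fintype ι] (A : ι → (H →L[ℂ] H)) (B : ι → (H₂ →L[ℂ] H₂))
    (hB : ∀ c : ι → ℂ, IsStarNormal (∑ i, c i • B i)) (hBc : ∀ i j, Commute (B i) (B j))
    (p : ℕ) (P : PSys S (2 * (p + 1))) (hA : ∀ i n j, Commute (A i) (P.E n j))
    (K : ℝ) (hK : 0 < K)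
    (hc : ∀ i n j, ∃ c : ℂ, ‖(A i - c • (1 : H →L[ℂ] H)) * P.E n j‖ ≤ K / 2 ^ n)
    (T : H →L[ℂ] H₂) (hT : (elemOp A B ^ (p + 2)) T = 0) (x : H) (G : ℝ) (hG : 0 ≤ G)
    (hGe : G = (3 * (1 + ∑ i, ‖B i‖) * K) ^ (p + 1) * ‖T‖) (n : ℕ) :
    (∑ j, ‖(elemOp A B ^ (p + 1)) T (P.u x n j)‖ ^ 2 ≤ G ^ 2) ∧
    (∑ j, (‖(elemOp A B ^ p) T (P.u x n j)‖ * (2 * (K / 2 ^ n))) ^ 2 ≤ (2 * G) ^ 2) ∧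
    (∀ i, ∑ j, ‖(elemOp A B ^ p) T (P.w x (A i) n j)‖ ^ 2 ≤ (2 * G) ^ 2) := by
  set b := 1 + ∑ i, ‖B i‖ with hb
  have hb1 : 1 ≤ b := by
    have : 0 ≤ ∑ i, ‖B i‖ := Finset.sum_nonneg fun _ _ => norm_nonneg _
    linarith
  set ε := K / 2 ^ n with hε
  have hε0 : 0 < ε := by positivity
  set q := 3 * b * ε with hq
  have hq0 : 0 ≤ q := by positivity
  have hεq : ε ≤ q := by nlinarith
  have cb : ∀ (s : ℕ) (j : P.J n) (v : H), P.E n j v = v →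
      ‖(elemOp A B ^ s) T v‖ ≤ q ^ s * ‖T‖ * ‖v‖ := by
    intro s j v hv
    have h1 := cell_est_pow A B hB hBc (P.E n j) (fun i => hA i n j) (P.idem n j) (P.E_norm n j)
      ε hε0 (fun i => hc i n j) (p + 2) T hT s
    have h2 := ((elemOp A B ^ s) T ∘L P.E n j).le_opNorm v
    rw [comp_apply, hv] at h2
    exact h2.trans (by gcongr)
  have hcard : (Fintype.card (P.J n) : ℝ) * (q ^ (p + 1) * ‖T‖) ^ 2 ≤ G ^ 2 := by
    have h1 : (Fintype.card (P.J n) : ℝ) ≤ (2 ^ n) ^ (2 * (p + 1)) := by exact_mod_cast P.card n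
    calc (Fintype.card (P.J n) : ℝ) * (q ^ (p + 1) * ‖T‖) ^ 2
        ≤ (2 ^ n) ^ (2 * (p + 1)) * (q ^ (p + 1) * ‖T‖) ^ 2 := by gcongr
      _ = ((2 ^ n * q) ^ (p + 1) * ‖T‖) ^ 2 := by ring
      _ = G ^ 2 := by
        rw [hGe]
        have : (2 : ℝ) ^ n * q = 3 * b * K := by rw [hq, hε]; field_simp
        rw [this]
  have gen : ∀ (f : P.J n → ℝ) (t : ℝ), 0 ≤ t → (∀ j, 0 ≤ f j) →
      (∀ j, f j ≤ t * (q ^ (p + 1) * ‖T‖)) → ∑ j, f j ^ 2 ≤ (t * G) ^ 2 := by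
    intro f t ht h0 hf
    calc ∑ j, f j ^ 2 ≤ ∑ j : P.J n, (t * (q ^ (p + 1) * ‖T‖)) ^ 2 := by
          refine Finset.sum_le_sum fun j _ => ?_
          have := h0 j
          have := hf j
          gcongr
      _ = t ^ 2 * ((Fintype.card (P.J n) : ℝ) * (q ^ (p + 1) * ‖T‖) ^ 2) := by
        rw [Finset.sum_const, Finset.card_univ, nsmul_eq_mul]; ring
      _ ≤ t ^ 2 * G ^ 2 := by gcongr
      _ = (t * G) ^ 2 := by ring
  refine ⟨?_, ?_, ?_⟩
  · have := gen (fun j => ‖(elemOp A B ^ (p + 1)) T (P.u x n j)‖) 1 (by norm_num)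
      (fun _ => norm_nonneg _) (fun j => ?_)
    · simpa using this
    · refine (cb _ j _ (P.E_u x n j)).trans ?_
      rw [one_mul]
      exact mul_le_of_le_one_right (by positivity) (P.u_norm x n j)
  · refine gen _ 2 (by norm_num) (fun j => by positivity) (fun j => ?_)
    have h1 : ‖(elemOp A B ^ p) T (P.u x n j)‖ ≤ q ^ p * ‖T‖ :=
      (cb _ j _ (P.E_u x n j)).trans
        (mul_le_of_le_one_right (by positivity) (P.u_norm x n j))
    calc _ ≤ (q ^ p * ‖T‖) * (2 * q) := by gcongr
      _ = _ := by ring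
  · intro i
    refine gen _ 2 (by norm_num) (fun j => by positivity) (fun j => ?_)
    have h2 : ‖P.w x (A i) n j‖ ≤ 2 * ε :=
      P.approx_pr x (A i) le_rfl j (hA i n) ε hε0.le (hc i n)
    refine (cb _ j _ (P.E_w x (A i) j (hA i n))).trans ?_
    calc _ ≤ (q ^ p * ‖T‖) * (2 * q) := by gcongr; linarith
      _ = _ := by ring

lemma A_decomp (P : PSys S r) (x : H) (A : H →L[ℂ] H) {n : ℕ} (j : P.J n)
    (hA : ∀ j, Commute A (P.E n j)) :
    A (P.u x n j) = (inner ℂ (P.u x n j) (A (P.u x n j)) : ℂ) • P.u x n j + P.w x A n j := by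
  rw [PSys.w, P.pr_Au x A j hA]; abel

lemma elemOp_u {ι : Type*} [Fintype ι] (A : ι → (H →L[ℂ] H)) (B : ι → (H₂ →L[ℂ] H₂))
    (P : PSys S r) (x : H) {n : ℕ} (j : P.J n) (hA : ∀ i j, Commute (A i) (P.E n j))
    (Y : H →L[ℂ] H₂) :
    elemOp A B Y (P.u x n j) =
      (∑ i, (inner ℂ (P.u x n j) (A i (P.u x n j)) : ℂ) • B i) (Y (P.u x n j)) +
      ∑ i, B i (Y (P.w x (A i) n j)) := by
  rw [elemOp_apply]
  simp only [ContinuousLinearMap.sum_apply, comp_apply, ContinuousLinearMap.smul_apply]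
  rw [← Finset.sum_add_distrib]
  refine Finset.sum_congr rfl fun i _ => ?_
  conv_lhs => rw [A_decomp P x (A i) j (hA i)]
  rw [map_add, map_add, map_smul, map_smul]

/-- pointwise inequality -/
lemma point_ineq {ι : Type*} [Fintype ι] (A : ι → (H →L[ℂ] H)) (B : ι → (H₂ →L[ℂ] H₂))
    (hB : ∀ c : ι → ℂ, IsStarNormal (∑ i, c i • B i))
    (P : PSys S r) (x : H) {n0 n : ℕ} (j : P.J n) (hA : ∀ i j, Commute (A i) (P.E n j))
    (Y Z : H →L[ℂ] H₂) (hYZ : elemOp A B Y = Z) (hZ : elemOp A B Z = 0) :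
    ‖Z (P.u x n j)‖ ^ 2 ≤ ∑ i, ‖B i‖ * (‖Y (P.u x n j)‖ * ‖Z (P.w x (A i) n j)‖) +
      ∑ i, ‖B i‖ * (‖Y (P.w x (A i) n j)‖ * ‖Z (P.u x n j - pr (P.u x n0) (P.u x n j))‖) +
      ∑ i, (inner ℂ (P.w x (A i) n j)
        ((adjoint (B i ∘L Y) ∘L Z) (pr (P.u x n0) (P.u x n j))) : ℂ).re := by
  set U := P.u x n j with hU
  set N := ∑ i, (inner ℂ U (A i U) : ℂ) • B i with hN
  have h1 : Z U = N (Y U) + ∑ i, B i (Y (P.w x (A i) n j)) := by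
    rw [← hYZ]; exact elemOp_u A B P x j hA Y
  have h2 : N (Z U) = - ∑ i, B i (Z (P.w x (A i) n j)) := by
    have := elemOp_u A B P x j hA Z
    rw [hZ, zero_apply] at this
    exact eq_neg_of_add_eq_zero_left this.symm
  have hNn : IsStarNormal N := hB _
  have h3 : ‖Z U‖ ^ 2 = (inner ℂ (N (Y U)) (Z U) : ℂ).re +
      ∑ i, (inner ℂ (B i (Y (P.w x (A i) n j))) (Z U) : ℂ).re := by
    rw [← Complex.re_sum, ← sum_inner, ← Complex.add_re, ← inner_add_left, ← h1]
    exact (inner_self_eq_norm_sq (𝕜 := ℂ) _).symm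
  have h4 : (inner ℂ (N (Y U)) (Z U) : ℂ).re ≤ ∑ i, ‖B i‖ * (‖Y U‖ * ‖Z (P.w x (A i) n j)‖) := by
    calc (inner ℂ (N (Y U)) (Z U) : ℂ).re ≤ ‖(inner ℂ (N (Y U)) (Z U) : ℂ)‖ := Complex.re_le_norm _
      _ = ‖(inner ℂ (Y U) (star N (Z U)) : ℂ)‖ := by rw [star_eq_adjoint, adjoint_inner_right]
      _ ≤ ‖Y U‖ * ‖star N (Z U)‖ := norm_inner_le_norm _ _
      _ = ‖Y U‖ * ‖∑ i, B i (Z (P.w x (A i) n j))‖ := by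
        rw [norm_star_apply N hNn, h2, norm_neg]
      _ ≤ ‖Y U‖ * ∑ i, ‖B i‖ * ‖Z (P.w x (A i) n j)‖ := by
        gcongr
        refine (norm_sum_le _ _).trans ?_
        gcongr
        exact le_opNorm _ _
      _ = _ := by
        rw [Finset.mul_sum]; exact Finset.sum_congr rfl fun _ _ => by ring
  rw [h3, add_assoc, ← Finset.sum_add_distrib]
  refine add_le_add h4 (Finset.sum_le_sum fun i _ => ?_)
  have h5 : (inner ℂ (B i (Y (P.w x (A i) n j))) (Z U) : ℂ) =
      inner ℂ (B i (Y (P.w x (A i) n j))) (Z (U - pr (P.u x n0) U)) +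
      inner ℂ (P.w x (A i) n j) ((adjoint (B i ∘L Y) ∘L Z) (pr (P.u x n0) U)) := by
    rw [comp_apply, adjoint_inner_right, comp_apply, ← inner_add_right, map_sub, sub_add_cancel]
  rw [h5, Complex.add_re]
  gcongr
  refine (Complex.re_le_norm _).trans ((norm_inner_le_norm _ _).trans ?_)
  rw [← mul_assoc]
  gcongr
  exact le_opNorm _ _

lemma main_sys {ι : Type*} [Fintype ι] (A : ι → (H →L[ℂ] H)) (B : ι → (H₂ →L[ℂ] H₂))
    (hB : ∀ c : ι → ℂ, IsStarNormal (∑ i, c i • B i)) (hBc : ∀ i j, Commute (B i) (B j))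
    (p : ℕ) (P : PSys S (2 * (p + 1))) (hA : ∀ i n j, Commute (A i) (P.E n j))
    (K : ℝ) (hK : 0 < K)
    (hc : ∀ i n j, ∃ c : ℂ, ‖(A i - c • (1 : H →L[ℂ] H)) * P.E n j‖ ≤ K / 2 ^ n)
    (T : H →L[ℂ] H₂) (hT : (elemOp A B ^ (p + 2)) T = 0) : (elemOp A B ^ (p + 1)) T = 0 := by
  ext x
  set b := 1 + ∑ i, ‖B i‖ with hb
  have hsB : 0 ≤ ∑ i, ‖B i‖ := Finset.sum_nonneg fun _ _ => norm_nonneg _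
  have hb0 : 0 ≤ b := by linarith
  set G := (3 * b * K) ^ (p + 1) * ‖T‖ with hG
  have hG0 : 0 ≤ G := by positivity
  set Z := (elemOp A B ^ (p + 1)) T with hZ
  set Y := (elemOp A B ^ p) T with hY
  have hYZ : elemOp A B Y = Z := by rw [hZ, pow_succ', Module.End.mul_apply]
  have hZ0 : elemOp A B Z = 0 := by rw [← hT, pow_succ' _ (p + 1), Module.End.mul_apply]
  set h : ℕ → ℝ := fun n => ∑ j, ‖Z (P.u x n j)‖ ^ 2 with hh
  have hmono : Monotone h := fun n0 n hn =>
    col_mono (P.u_oz x n0) (P.u_oz x n) (P.pr_u x hn) Z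
  have hbd : ∀ n, h n ≤ G ^ 2 := fun n =>
    (col_bounds A B hB hBc p P hA K hK hc T hT x G hG0 hG n).1
  have hbdd : BddAbove (Set.range h) := ⟨G ^ 2, by rintro _ ⟨n, rfl⟩; exact hbd n⟩
  set Hs := ⨆ n, h n with hHs
  have hlim : Filter.Tendsto h Filter.atTop (nhds Hs) := tendsto_atTop_ciSup hmono hbdd
  have hle : ∀ n, h n ≤ Hs := fun n => le_ciSup hbdd n
  have hw : ∀ i n j, ‖P.w x (A i) n j‖ ≤ 2 * (K / 2 ^ n) := fun i n j =>
    P.approx_pr x (A i) le_rfl j (hA i n) _ (by positivity) (hc i n)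
  have hH0 : Hs ≤ 0 := by
    refine final_limit h hmono Hs (b * (2 * G)) hlim
      (fun n0 n => ∑ i, Fintype.card (P.J n0) *
        (2 * (K / 2 ^ n) * ‖adjoint (B i ∘L Y) ∘L Z‖)) ?_ ?_
    · intro n0
      have t : Filter.Tendsto (fun n : ℕ => 2 * (K / 2 ^ n)) Filter.atTop (nhds 0) := by
        have := (tendsto_pow_atTop_nhds_zero_of_lt_one (r := (1/2 : ℝ)) (by norm_num)
          (by norm_num)).const_mul (2 * K)
        simp only [mul_zero] at this
        refine this.congr fun n' => ?_
        rw [div_pow, one_pow]; ring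
      have : Filter.Tendsto (fun n => ∑ i, (Fintype.card (P.J n0) : ℝ) *
        (2 * (K / 2 ^ n) * ‖adjoint (B i ∘L Y) ∘L Z‖)) Filter.atTop
        (nhds (∑ i, (Fintype.card (P.J n0) : ℝ) * (0 * ‖adjoint (B i ∘L Y) ∘L Z‖))) :=
        tendsto_finsetSum _ fun i _ => (t.mul_const _).const_mul _
      simpa using this
    · intro n0 n hn
      obtain ⟨-, cb2, cb3⟩ := col_bounds A B hB hBc p P hA K hK hc T hT x G hG0 hG n
      have e1 : 0 ≤ Hs - h n := sub_nonneg.2 (hle n)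
      have e2 : 0 ≤ h n - h n0 := sub_nonneg.2 (hmono hn)
      have hε : 0 < 2 * (K / 2 ^ n) := by positivity
      have b1 : ∀ i, ∑ j, ‖Y (P.u x n j)‖ * ‖Z (P.w x (A i) n j)‖ ≤ (2 * G) * √(Hs - h n) := by
        intro i
        have h1 := P.sum_Sw x (A i) Z (hA i) K hK.le (hc i) Hs hle n
        have h2 := sum_mul_le_of_sq (fun j => ‖Y (P.u x n j)‖ * (2 * (K / 2 ^ n)))
          (fun j => ‖Z (P.w x (A i) n j)‖ / (2 * (K / 2 ^ n))) (2 * G) (√(Hs - h n))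
          (by positivity) (by positivity) cb2 ?_
        · refine le_trans (le_of_eq ?_) h2
          refine Finset.sum_congr rfl fun j _ => ?_
          field_simp
        · simp only [div_pow]
          rw [← Finset.sum_div, Real.sq_sqrt e1, div_le_iff₀ (by positivity), mul_comm (Hs - h n)]
          exact h1
      have b2 : ∀ i, ∑ j, ‖Y (P.w x (A i) n j)‖ * ‖Z (P.u x n j - pr (P.u x n0) (P.u x n j))‖ ≤
          (2 * G) * √(h n - h n0) := by
        intro i
        refine sum_mul_le_of_sq _ _ _ _ (by positivity) (by positivity) (cb3 i) ?_
        rw [Real.sq_sqrt e2, col_sub (P.u_oz x n0) (P.u_oz x n) (P.pr_u x hn) Z]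
      have b3 : ∀ i, ∑ j, (inner ℂ (P.w x (A i) n j)
          ((adjoint (B i ∘L Y) ∘L Z) (pr (P.u x n0) (P.u x n j))) : ℂ).re ≤
          Fintype.card (P.J n0) * (2 * (K / 2 ^ n) * ‖adjoint (B i ∘L Y) ∘L Z‖) := by
        intro i
        rw [← Complex.re_sum]
        exact (Complex.re_le_norm _).trans
          (cross_bound P x (A i) _ (hA i n) _ hε.le (hw i n))
      have hBs : ∀ t : ℝ, 0 ≤ t → ∑ i, ‖B i‖ * t ≤ b * t := by
        intro t ht
        rw [← Finset.sum_mul]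
        exact mul_le_mul_of_nonneg_right (by linarith) ht
      calc h n ≤ ∑ j, (∑ i, ‖B i‖ * (‖Y (P.u x n j)‖ * ‖Z (P.w x (A i) n j)‖) +
          ∑ i, ‖B i‖ * (‖Y (P.w x (A i) n j)‖ * ‖Z (P.u x n j - pr (P.u x n0) (P.u x n j))‖) +
          ∑ i, (inner ℂ (P.w x (A i) n j)
            ((adjoint (B i ∘L Y) ∘L Z) (pr (P.u x n0) (P.u x n j))) : ℂ).re) :=
            Finset.sum_le_sum fun j _ => point_ineq A B hB P x j (fun i j => hA i n j) Y Z hYZ hZ0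
        _ = ∑ i, ‖B i‖ * ∑ j, (‖Y (P.u x n j)‖ * ‖Z (P.w x (A i) n j)‖) +
          ∑ i, ‖B i‖ * ∑ j, (‖Y (P.w x (A i) n j)‖ *
            ‖Z (P.u x n j - pr (P.u x n0) (P.u x n j))‖) +
          ∑ i, ∑ j, (inner ℂ (P.w x (A i) n j)
            ((adjoint (B i ∘L Y) ∘L Z) (pr (P.u x n0) (P.u x n j))) : ℂ).re := by
            rw [Finset.sum_add_distrib, Finset.sum_add_distrib, Finset.sum_comm]
            congr 1
            · congr 1
              · exact Finset.sum_congr rfl fun i _ => by rw [Finset.mul_sum]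
              · rw [Finset.sum_comm]
                exact Finset.sum_congr rfl fun i _ => by rw [Finset.mul_sum]
            · rw [Finset.sum_comm]
        _ ≤ ∑ i, ‖B i‖ * ((2 * G) * √(Hs - h n)) + ∑ i, ‖B i‖ * ((2 * G) * √(h n - h n0)) +
          ∑ i, Fintype.card (P.J n0) * (2 * (K / 2 ^ n) * ‖adjoint (B i ∘L Y) ∘L Z‖) := by
            refine add_le_add (add_le_add ?_ ?_) (Finset.sum_le_sum fun i _ => b3 i)
            · exact Finset.sum_le_sum fun i _ => mul_le_mul_of_nonneg_left (b1 i) (norm_nonneg _)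
            · exact Finset.sum_le_sum fun i _ => mul_le_mul_of_nonneg_left (b2 i) (norm_nonneg _)
        _ ≤ b * ((2 * G) * √(Hs - h n)) + b * ((2 * G) * √(h n - h n0)) +
          ∑ i, Fintype.card (P.J n0) * (2 * (K / 2 ^ n) * ‖adjoint (B i ∘L Y) ∘L Z‖) := by
            gcongr
            · exact hBs _ (by positivity)
            · exact hBs _ (by positivity)
        _ = _ := by rw [mul_assoc b (2 * G), mul_assoc b (2 * G)]
  have h0 : h 0 = 0 := le_antisymm ((hle 0).trans hH0) (Finset.sum_nonneg fun _ _ => by positivity)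
  have hz : ∀ j, Z (P.u x 0 j) = 0 := by
    intro j
    have := (Finset.sum_eq_zero_iff_of_nonneg (fun _ _ => by positivity)).1 h0 j (Finset.mem_univ _)
    simpa using this
  rw [← P.Esum 0 x, map_sum, zero_apply]
  refine Finset.sum_eq_zero fun j _ => ?_
  rw [P.u_back, map_smul, hz, smul_zero]

end part5

section part6

variable {H : Type*} [NormedAddCommGroup H] [InnerProductSpace ℂ H] [CompleteSpace H]
  {H₂ : Type*} [NormedAddCommGroup H₂] [InnerProductSpace ℂ H₂] [CompleteSpace H₂]

lemma comm_re {W a : H →L[ℂ] H} (h : Commute W a) (h' : Commute W (star a)) :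
    Commute W (realPart a : H →L[ℂ] H) := by
  rw [realPart_apply_coe]
  exact (h.add_right h').smul_right _

lemma comm_im {W a : H →L[ℂ] H} (h : Commute W a) (h' : Commute W (star a)) :
    Commute W (imaginaryPart a : H →L[ℂ] H) := by
  rw [imaginaryPart_apply_coe]
  exact ((h.sub_right h').smul_right _).smul_right _

/-- the case in which one of the operators is the identity -/
lemma main_one {ι : Type*} [Fintype ι] [DecidableEq ι] (p : ℕ) (hcard : Fintype.card ι = p + 2)
    (C : ι → (H →L[ℂ] H)) (B : ι → (H₂ →L[ℂ] H₂)) (l : ι) (hl : C l = 1)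
    (hC : ∀ i j, Commute (C i) (C j)) (hC' : ∀ i j, Commute (C i) (star (C j)))
    (hB : ∀ c : ι → ℂ, IsStarNormal (∑ i, c i • B i)) (hBc : ∀ i j, Commute (B i) (B j))
    (T : H →L[ℂ] H₂) (hT : (elemOp C B ^ (p + 2)) T = 0) : (elemOp C B ^ (p + 1)) T = 0 := by
  classical
  let f : {i // i ≠ l} × Bool → (H →L[ℂ] H) := fun q =>
    if q.2 then (imaginaryPart (C q.1) : H →L[ℂ] H) else (realPart (C q.1) : H →L[ℂ] H)
  have hfW : ∀ W : H →L[ℂ] H, (∀ i, Commute W (C i)) → (∀ i, Commute W (star (C i))) →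
      ∀ q, Commute W (f q) := by
    rintro W h h' ⟨i, b⟩
    cases b
    · exact comm_re (h i) (h' i)
    · exact comm_im (h i) (h' i)
  have hsC : ∀ i j, Commute (star (C i)) (star (C j)) := fun i j => (hC i j).star_star
  have hsC' : ∀ i j, Commute (star (C i)) (C j) := fun i j => (hC' j i).symm
  have hfC : ∀ i q, Commute (C i) (f q) := fun i => hfW _ (hC i) (hC' i)
  have hfsC : ∀ i q, Commute (star (C i)) (f q) := fun i => hfW _ (hsC' i) (hsC i)
  have hff : ∀ q q', Commute (f q) (f q') := fun q =>
    hfW _ (fun i => (hfC i q).symm) (fun i => (hfsC i q).symm)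
  have hsa : ∀ q, IsSelfAdjoint (f q) := by
    rintro ⟨i, b⟩
    cases b
    · exact (realPart (C i)).2
    · exact (imaginaryPart (C i)).2
  obtain ⟨P⟩ := exists_psys f hsa hff Finset.univ
  have hn : (Finset.univ : Finset ({i // i ≠ l} × Bool)).card = 2 * (p + 1) := by
    rw [Finset.card_univ, Fintype.card_prod, Fintype.card_bool]
    have : Fintype.card {i // i ≠ l} = p + 1 := by
      rw [Fintype.card_subtype_compl, hcard]; simp
    rw [this, mul_comm]
  rw [hn] at P
  have hmem : ∀ q, f q ∈ Set.image f ↑(Finset.univ : Finset ({i // i ≠ l} × Bool)) := fun q =>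
    ⟨q, by simp, rfl⟩
  have hK := P.K0
  refine main_sys C B hB hBc p P (fun i n j => P.comm n j _ ?_) (P.K + P.K + 1) (by linarith)
    (fun i n j => ?_) T hT
  · rintro _ ⟨q, -, rfl⟩
    exact hfC i q
  · by_cases hi : i = l
    · refine ⟨1, ?_⟩
      rw [hi, hl]
      simp only [one_smul, sub_self, zero_mul, norm_zero]
      exact div_nonneg (by linarith) (by positivity)
    · obtain ⟨c1, h1⟩ := P.approx n j _ (hmem (⟨i, hi⟩, false))
      obtain ⟨c2, h2⟩ := P.approx n j _ (hmem (⟨i, hi⟩, true))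
      refine ⟨c1 + Complex.I * c2, ?_⟩
      have e : C i = f (⟨i, hi⟩, false) + Complex.I • f (⟨i, hi⟩, true) :=
        (realPart_add_I_smul_imaginaryPart (C i)).symm
      have e2 : (C i - (c1 + Complex.I * c2) • (1 : H →L[ℂ] H)) * P.E n j =
          (f (⟨i, hi⟩, false) - c1 • (1 : H →L[ℂ] H)) * P.E n j +
          Complex.I • ((f (⟨i, hi⟩, true) - c2 • (1 : H →L[ℂ] H)) * P.E n j) := by
        rw [e, ← smul_mul_assoc, ← add_mul]
        congr 1
        rw [smul_sub, smul_smul, add_smul]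
        abel
      rw [e2]
      refine (norm_add_le _ _).trans ?_
      rw [norm_smul, Complex.norm_I, one_mul]
      refine (add_le_add h1 h2).trans ?_
      rw [← add_div]
      exact div_le_div_of_nonneg_right (by linarith) (by positivity)

lemma elemOp_transfer {ι : Type*} [Fintype ι] (A C : ι → (H →L[ℂ] H)) (B : ι → (H₂ →L[ℂ] H₂))
    (a Φ : H →L[ℂ] H) (hCa : ∀ i, Commute (C i) a) (hCΦ : ∀ i, Commute (C i) Φ)
    (haΦ : Commute a Φ)
    (hAC : ∀ i, Φ * A i = Φ * C i * a) (T : H →L[ℂ] H₂) (n : ℕ) :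
    (elemOp A B ^ n) (T ∘L Φ) = (elemOp C B ^ n) (T ∘L Φ) ∘L (a ^ n) := by
  have key : ∀ X : H →L[ℂ] H₂, elemOp A B (X ∘L Φ) = elemOp C B (X ∘L Φ) ∘L a := by
    intro X
    rw [elemOp_apply, elemOp_apply, ContinuousLinearMap.finsetSum_comp]
    refine Finset.sum_congr rfl fun i _ => ?_
    have : Φ ∘L A i = (Φ ∘L C i) ∘L a := hAC i
    simp only [comp_assoc] at this ⊢
    rw [this]
  induction n with
  | zero => simp; rfl
  | succ n ih =>
    rw [pow_succ', Module.End.mul_apply, ih, elemOp_pow_comp C B Φ hCΦ]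
    have h1 : Φ ∘L (a ^ n) = (a ^ n) ∘L Φ := ((haΦ.pow_left n).eq).symm
    rw [comp_assoc, h1, ← comp_assoc, key, comp_assoc, ← h1, ← comp_assoc,
      elemOp_comp C B (a ^ n) (fun i => (hCa i).pow_right n), pow_succ' (elemOp C B),
      Module.End.mul_apply, elemOp_pow_comp C B Φ hCΦ, comp_assoc, pow_succ]
    rfl

lemma reduce_delta {ι : Type*} [Fintype ι] [DecidableEq ι] (p : ℕ)
    (hcard : Fintype.card ι = p + 2)
    (A : ι → (H →L[ℂ] H)) (B : ι → (H₂ →L[ℂ] H₂)) (l : ι)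
    (hA : ∀ i j, Commute (A i) (A j)) (hA' : ∀ i j, Commute (A i) (star (A j)))
    (hB : ∀ c : ι → ℂ, IsStarNormal (∑ i, c i • B i)) (hBc : ∀ i j, Commute (B i) (B j))
    (T : H →L[ℂ] H₂) (hT : (elemOp A B ^ (p + 2)) T = 0) (δ : ℝ) (hδ : 0 < δ) :
    (elemOp A B ^ (p + 1)) T ∘L (cfc (fun t : ℝ => max (t - δ) 0) (star (A l) * A l)) = 0 := by
  set h := star (A l) * A l with hh
  have hsa : IsSelfAdjoint h := IsSelfAdjoint.star_mul_self _
  set Φ := cfc (fun t : ℝ => max (t - δ) 0) h with hΦ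
  set g := cfc (fun t : ℝ => (max t δ)⁻¹) h with hg
  have hgc : Continuous (fun t : ℝ => (max t δ)⁻¹) :=
    Continuous.inv₀ (by fun_prop) (fun t => (lt_of_lt_of_le hδ (le_max_right _ _)).ne')
  have hA'' : ∀ i j, Commute (star (A i)) (A j) := fun i j => (hA' j i).symm
  have hAs : ∀ i j, Commute (star (A i)) (star (A j)) := fun i j => (hA i j).star_star
  have hhA : ∀ i, Commute h (A i) := fun i => (hA'' l i).mul_left (hA l i)
  have hhA' : ∀ i, Commute h (star (A i)) := fun i => (hAs l i).mul_left (hA' l i)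
  have hgA : ∀ i, Commute g (A i) := fun i => (hhA i).cfc_real _
  have hgA' : ∀ i, Commute g (star (A i)) := fun i => (hhA' i).cfc_real _
  have hΦA : ∀ i, Commute Φ (A i) := fun i => (hhA i).cfc_real _
  have hΦA' : ∀ i, Commute Φ (star (A i)) := fun i => (hhA' i).cfc_real _
  have hgΦ : Commute Φ g := cfc_commute_cfc _ _ _
  have hgs : star g = g := (cfc_predicate (R := ℝ) _ h : IsSelfAdjoint g)
  have hhgΦ : h * g * Φ = Φ := by
    have e : h = cfc (fun t : ℝ => t) h := (cfc_id' ℝ h).symm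
    calc h * g * Φ = cfc (fun t : ℝ => t) h * g * Φ := by rw [← e]
      _ = Φ := by
        rw [hg, ← cfc_mul (fun t : ℝ => t) (fun t : ℝ => (max t δ)⁻¹) h (by fun_prop)
          hgc.continuousOn, hΦ, ← cfc_mul _ _ h (by exact (continuous_id.mul hgc).continuousOn)
          (by fun_prop)]
        congr 1
        ext t
        rcases le_total t δ with ht | ht
        · rw [max_eq_right (by linarith : t - δ ≤ 0), mul_zero]
        · rw [max_eq_left ht, mul_inv_cancel₀ (by linarith), one_mul]
  set V := star (A l) * g with hV
  have hVA : ∀ i, Commute V (A i) := fun i => (hA'' l i).mul_left (hgA i)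
  have hVA' : ∀ i, Commute V (star (A i)) := fun i => (hAs l i).mul_left (hgA' i)
  have hVΦ : Commute Φ V := (hΦA' l).mul_right hgΦ
  have hVs : star V = g * A l := by rw [hV, star_mul, star_star, hgs]
  have hVVs : Commute V (star V) := by
    rw [hVs]
    exact (((hgA' l).symm.mul_left (Commute.refl g))).mul_right (hVA l)
  have hAVΦ : A l * V * Φ = Φ := by
    rw [hV, ← mul_assoc, (hA' l l).eq, ← hh, hhgΦ]
  have hΦAV : Φ * (A l * V) = Φ := by
    rw [((hΦA l).mul_right hVΦ).eq, hAVΦ]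
  let C : ι → (H →L[ℂ] H) := fun i => if i = l then 1 else A i * V
  have hCl : C l = 1 := if_pos rfl
  have hCW : ∀ W : H →L[ℂ] H, (∀ i, Commute (A i) W) → Commute V W → ∀ i, Commute (C i) W := by
    intro W h1 h2 i
    by_cases hi : i = l
    · rw [hi, hCl]; exact Commute.one_left _
    · simp only [C, if_neg hi]
      exact (h1 i).mul_left h2
  have hCA : ∀ i j, Commute (C i) (A j) := fun i j => hCW _ (fun i => hA i j) (hVA j) i
  have hCA' : ∀ i j, Commute (C i) (star (A j)) := fun i j => hCW _ (fun i => hA' i j) (hVA' j) i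
  have hCV : ∀ i, Commute (C i) V := hCW _ (fun i => (hVA i).symm) (Commute.refl _)
  have hCV' : ∀ i, Commute (C i) (star V) :=
    hCW _ (fun i => by simpa using (hVA' i).symm.star_star) hVVs
  have hCC : ∀ i j, Commute (C i) (C j) := fun i j =>
    (hCW _ (fun m => (hCA i m).symm) (hCV i).symm j).symm
  have hCC' : ∀ i j, Commute (C i) (star (C j)) := fun i j => by
    have := hCW (star (C i)) (fun m => by simpa using (hCA' i m).symm.star_star)
      (by simpa using (hCV' i).symm.star_star) j
    simpa using this.symm.star_star
  have hCΦ : ∀ i, Commute (C i) Φ := hCW _ (fun i => (hΦA i).symm) hVΦ.symm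
  have hAC : ∀ i, Φ * A i = Φ * C i * A l := by
    intro i
    by_cases hi : i = l
    · rw [hi, hCl, mul_one]
    · simp only [C, if_neg hi]
      rw [mul_assoc, mul_assoc, (hVA l).eq, ← mul_assoc, (hΦA i).eq, mul_assoc, hΦAV]
  have tr := elemOp_transfer A C B (A l) Φ (fun i => hCA i l) hCΦ (hΦA l).symm hAC T
  have hpow : ∀ n, Φ * ((A l) ^ n * V ^ n) = Φ := by
    intro n
    rw [← (hVA l).symm.mul_pow]
    induction n with
    | zero => simp
    | succ n ih => rw [pow_succ', ← mul_assoc, hΦAV, ih]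
  have h0 : (elemOp C B ^ (p + 2)) (T ∘L Φ) = 0 := by
    have h1 := tr (p + 2)
    rw [elemOp_pow_comp A B Φ (fun i => (hΦA i).symm), hT, zero_comp,
      elemOp_pow_comp C B Φ hCΦ] at h1
    have h2 : Φ ∘L ((A l ^ (p + 2)) ∘L (V ^ (p + 2))) = Φ := hpow (p + 2)
    rw [elemOp_pow_comp C B Φ hCΦ]
    conv_lhs => rw [← h2]
    rw [← comp_assoc, ← comp_assoc, ← h1, zero_comp]
  have h3 := main_one p hcard C B l hCl hCC hCC' hB hBc _ h0
  have h4 := tr (p + 1)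
  rw [h3, zero_comp, elemOp_pow_comp A B Φ (fun i => (hΦA i).symm)] at h4
  exact h4

lemma reduce {ι : Type*} [Fintype ι] [DecidableEq ι] (p : ℕ)
    (hcard : Fintype.card ι = p + 2)
    (A : ι → (H →L[ℂ] H)) (B : ι → (H₂ →L[ℂ] H₂))
    (hA : ∀ i j, Commute (A i) (A j)) (hA' : ∀ i j, Commute (A i) (star (A j)))
    (hB : ∀ c : ι → ℂ, IsStarNormal (∑ i, c i • B i)) (hBc : ∀ i j, Commute (B i) (B j))
    (T : H →L[ℂ] H₂) (hT : (elemOp A B ^ (p + 2)) T = 0) : (elemOp A B ^ (p + 1)) T = 0 := by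
  set Z := (elemOp A B ^ (p + 1)) T with hZ
  have hZh : ∀ l, Z ∘L (star (A l) * A l) = 0 := by
    intro l
    set h := star (A l) * A l with hh
    have hsa : IsSelfAdjoint h := IsSelfAdjoint.star_mul_self _
    have hpos : 0 ≤ h := star_mul_self_nonneg _
    have bd : ∀ δ : ℝ, 0 < δ → ‖Z ∘L h‖ ≤ ‖Z‖ * δ := by
      intro δ hδ
      have h1 := reduce_delta p hcard A B l hA hA' hB hBc T hT δ hδ
      rw [← hZ, ← hh] at h1
      have h2 : Z ∘L h = Z ∘L (h - cfc (fun t : ℝ => max (t - δ) 0) h) := by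
        rw [comp_sub, h1, sub_zero]
      rw [h2]
      refine (opNorm_comp_le _ _).trans ?_
      gcongr
      have e : h - cfc (fun t : ℝ => max (t - δ) 0) h =
          cfc (fun t : ℝ => t - max (t - δ) 0) h := by
        rw [cfc_sub .., cfc_id' ..]
      rw [e]
      refine norm_cfc_le hδ.le fun t ht => ?_
      have ht0 : 0 ≤ t := spectrum_nonneg_of_nonneg hpos ht
      rw [Real.norm_eq_abs, abs_le]
      rcases le_total t δ with h | h
      · rw [max_eq_right (by linarith)]; constructor <;> linarith
      · rw [max_eq_left (by linarith)]; constructor <;> linarith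
    have t : Filter.Tendsto (fun δ : ℝ => ‖Z‖ * δ) (nhdsWithin 0 (Set.Ioi 0)) (nhds (‖Z‖ * 0)) :=
      ((continuous_const.mul continuous_id).tendsto 0).mono_left nhdsWithin_le_nhds
    have := ge_of_tendsto t (Filter.eventually_of_mem self_mem_nhdsWithin bd)
    rw [mul_zero] at this
    exact norm_le_zero_iff.1 this
  have hAZ : ∀ l y, A l (adjoint Z y) = 0 := by
    intro l y
    have h1 : star (A l) (A l (adjoint Z y)) = 0 := by
      have h2 : adjoint (Z ∘L (star (A l) * A l)) = 0 := by rw [hZh, map_zero]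
      rw [adjoint_comp, ← star_eq_adjoint (star (A l) * A l), star_mul, star_star] at h2
      exact DFunLike.congr_fun h2 y
    have h3 : (inner ℂ (A l (adjoint Z y)) (A l (adjoint Z y)) : ℂ) = 0 := by
      rw [← adjoint_inner_left, ← star_eq_adjoint, h1, inner_zero_left]
    exact inner_self_eq_zero.1 h3
  have hZZ : ∀ y, adjoint Z y = 0 := by
    intro y
    have h1 : Z (adjoint Z y) = 0 := by
      have e : Z = elemOp A B ((elemOp A B ^ p) T) := by
        rw [hZ, pow_succ', Module.End.mul_apply]
      refine (DFunLike.congr_fun e _).trans ?_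
      rw [elemOp_apply]
      simp [hAZ]
    have h3 : (inner ℂ (adjoint Z y) (adjoint Z y) : ℂ) = 0 := by
      rw [adjoint_inner_right, h1, inner_zero_left]
    exact inner_self_eq_zero.1 h3
  have : adjoint Z = 0 := by ext y; simp [hZZ]
  simpa using this

lemma sum_normal {ι : Type*} [Fintype ι] (B : ι → (H →L[ℂ] H))
    (hB' : ∀ i j, Commute (B i) (star (B j))) (c : ι → ℂ) : IsStarNormal (∑ i, c i • B i) := by
  constructor
  rw [star_sum]
  refine Commute.sum_left _ _ _ fun i _ => Commute.sum_right _ _ _ fun j _ => ?_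
  rw [star_smul]
  exact ((hB' j i).symm.smul_left _).smul_right _

lemma fuglede {ι : Type*} (A : ι → (H →L[ℂ] H)) (hc : ∀ i j, A i ∘L A j = A j ∘L A i)
    (hn : ∀ i, adjoint (A i) ∘L A i = A i ∘L adjoint (A i)) (i j : ι) :
    Commute (A i) (star (A j)) := by
  have h1 : IsStarNormal (A j) := ⟨hn j⟩
  have h2 : Commute (A i) (A j) := hc i j
  exact h1.commute_star_right h2

end part6

/-- For the multiplication operator `Δ(T) = ∑_{i=1}^k B i T A i`, where `{A i}` and `{B i}`
are commuting families of bounded normal operators on separable Hilbert spaces and `k ≥ 2`,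
one has `ker Δ^{k-1} = ker Δ^k`, i.e. the ascent of `Δ` is at most `k - 1`. -/
theorem ascent_le_card_sub_one_of_commuting_normal
    {H₁ H₂ : Type*}
    [NormedAddCommGroup H₁] [InnerProductSpace ℂ H₁] [CompleteSpace H₁]
    [TopologicalSpace.SeparableSpace H₁]
    [NormedAddCommGroup H₂] [InnerProductSpace ℂ H₂] [CompleteSpace H₂]
    [TopologicalSpace.SeparableSpace H₂]
    (k : ℕ) (hk : 2 ≤ k)
    (A : Fin k → (H₁ →L[ℂ] H₁)) (B : Fin k → (H₂ →L[ℂ] H₂))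
    (hAcomm : ∀ i j, A i ∘L A j = A j ∘L A i)
    (hAnormal : ∀ i, adjoint (A i) ∘L A i = A i ∘L adjoint (A i))
    (hBcomm : ∀ i j, B i ∘L B j = B j ∘L B i)
    (hBnormal : ∀ i, adjoint (B i) ∘L B i = B i ∘L adjoint (B i))
    (T : H₁ →L[ℂ] H₂) :
    (fun S : H₁ →L[ℂ] H₂ => ∑ i, B i ∘L S ∘L A i)^[k - 1] T = 0 ↔
      (fun S : H₁ →L[ℂ] H₂ => ∑ i, B i ∘L S ∘L A i)^[k] T = 0 := by
  obtain ⟨p, rfl⟩ := Nat.exists_eq_add_of_le' hk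
  have e : ∀ n, (fun S : H₁ →L[ℂ] H₂ => ∑ i, B i ∘L S ∘L A i)^[n] T = (elemOp A B ^ n) T := by
    intro n
    rw [Module.End.pow_apply]
    rfl
  rw [e, e]
  have hp : p + 2 - 1 = p + 1 := rfl
  rw [hp]
  constructor
  · intro h
    rw [pow_succ' _ (p + 1), Module.End.mul_apply, h, map_zero]
  · intro h
    exact reduce p (by simp) A B (fun i j => hAcomm i j) (fuglede A hAcomm hAnormal)
      (sum_normal B (fuglede B hBcomm hBnormal)) (fun i j => hBcomm i j) T h
end
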